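/- arXiv:q-alg/9603016 — 2 statements merged into one kernel-verified Lean document; each statement's English description precedes it below -/
import Mathlib

section
/- Crossed products M ×_{ρ,σ} C and M ×_{ρ',σ'} C corresponding to the same entwining data (P, C, ψ, e, ψ^C) are equivalent (there exists an algebra and left M-module isomorphism Θ : M ×_{ρ',σ'} C → M ×_{ρ,σ} C such that ψ^C₂₃∘ψ₁₂∘(id_C ⊗ Θ̃) = (Θ̃ ⊗ id_C)∘ψ^C where Θ̃(c) = Θ(1 ⊗ c)) if and only if the crossed product data (ρ, σ) and (ρ', σ') are gauge equivalent, i.e. there exists a convolution invertible γ : C → M with γ(e) = 1 satisfying the covariance condition (2.16) such that (ρ', σ') are equivalent to (ρ^γ, σ^γ). -/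
open TensorProduct LinearMap

noncomputable section

namespace Entwine

variable (k : Type) [Field k] (P : Type) [Ring P] [Algebra k P]
  (C : Type) [AddCommGroup C] [Module k C] [Coalgebra k C]

/-- coproduct of `C` -/
abbrev Δ : C →ₗ[k] C ⊗[k] C := Coalgebra.comul
/-- counit of `C` -/
abbrev ε : C →ₗ[k] k := Coalgebra.counit
/-- multiplication of `P` -/
abbrev μ : P ⊗[k] P →ₗ[k] P := LinearMap.mul' k P

variable (ψ : C ⊗[k] P →ₗ[k] P ⊗[k] C)

/-- entwining axiom `ψ∘(id⊗μ) = (μ⊗id)∘ψ₂₃∘ψ₁₂` -/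
def AxMul : Prop :=
  ψ ∘ₗ map LinearMap.id (μ k P) =
    map (μ k P) LinearMap.id
      ∘ₗ (TensorProduct.assoc k P P C).symm.toLinearMap
      ∘ₗ map LinearMap.id ψ
      ∘ₗ (TensorProduct.assoc k P C P).toLinearMap
      ∘ₗ map ψ LinearMap.id
      ∘ₗ (TensorProduct.assoc k C P P).symm.toLinearMap

/-- entwining axiom `ψ(c ⊗ 1) = 1 ⊗ c` -/
def AxOne : Prop := ∀ c : C, ψ (c ⊗ₜ (1 : P)) = (1 : P) ⊗ₜ c

/-- entwining axiom `(id⊗Δ)∘ψ = ψ₁₂∘ψ₂₃∘(Δ⊗id)` -/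
def AxComul : Prop :=
  map LinearMap.id (Δ k C) ∘ₗ ψ =
    (TensorProduct.assoc k P C C).toLinearMap
      ∘ₗ map ψ LinearMap.id
      ∘ₗ (TensorProduct.assoc k C P C).symm.toLinearMap
      ∘ₗ map LinearMap.id ψ
      ∘ₗ (TensorProduct.assoc k C C P).toLinearMap
      ∘ₗ map (Δ k C) LinearMap.id

/-- entwining axiom `(id⊗ε)∘ψ = ε⊗id` -/
def AxCounit : Prop :=
  (TensorProduct.rid k P).toLinearMap ∘ₗ map LinearMap.id (ε k C) ∘ₗ ψ =
    (TensorProduct.lid k P).toLinearMap ∘ₗ map (ε k C) LinearMap.id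

/-- `ψ` is an entwining map for the algebra `P` and the coalgebra `C` -/
def IsEntwining : Prop :=
  AxMul k P C ψ ∧ AxOne k P C ψ ∧ AxComul k P C ψ ∧ AxCounit k P C ψ

variable (e : C)

/-- `e` is a group-like element -/
def IsGrouplike : Prop :=
  Δ k C e = e ⊗ₜ[k] e ∧ ε k C e = 1

variable (ψC : C ⊗[k] C →ₗ[k] C ⊗[k] C)

/-- `(id⊗Δ)∘ψ^C = ψ^C₁₂∘ψ^C₂₃∘(Δ⊗id)` -/
def AxPsiCComul : Prop :=
  map LinearMap.id (Δ k C) ∘ₗ ψC =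
    (TensorProduct.assoc k C C C).toLinearMap
      ∘ₗ map ψC LinearMap.id
      ∘ₗ (TensorProduct.assoc k C C C).symm.toLinearMap
      ∘ₗ map LinearMap.id ψC
      ∘ₗ (TensorProduct.assoc k C C C).toLinearMap
      ∘ₗ map (Δ k C) LinearMap.id

/-- `(id⊗ε)∘ψ^C = ε⊗id` -/
def AxPsiCCounit : Prop :=
  (TensorProduct.rid k C).toLinearMap ∘ₗ map LinearMap.id (ε k C) ∘ₗ ψC =
    (TensorProduct.lid k C).toLinearMap ∘ₗ map (ε k C) LinearMap.id

/-- `ψ^C(e ⊗ c) = Δc` -/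
def AxPsiCUnit : Prop := ∀ c : C, ψC (e ⊗ₜ[k] c) = Δ k C c

/-- `(P, C, ψ, e, ψ^C)` form entwining data -/
def IsEntwiningData : Prop :=
  IsEntwining k P C ψ ∧ IsGrouplike k C e ∧
    AxPsiCComul k C ψC ∧ AxPsiCCounit k C ψC ∧ AxPsiCUnit k C e ψC

/-- the right coaction `Δ_R u = ψ(e ⊗ u)` on `P` -/
def deltaR : P →ₗ[k] P ⊗[k] C := ψ ∘ₗ TensorProduct.mk k C P e

/-- the fixed point subspace `M = P^{coC}_e`, as a submodule of `P` -/
def Msub : Submodule k P where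
  carrier := {x : P | ψ (e ⊗ₜ x) = x ⊗ₜ e}
  add_mem' := by
    intro a b ha hb
    simp only [Set.mem_setOf_eq] at *
    rw [TensorProduct.tmul_add, map_add, ha, hb, TensorProduct.add_tmul]
  zero_mem' := by
    simp only [Set.mem_setOf_eq, TensorProduct.tmul_zero, map_zero,
      TensorProduct.zero_tmul]
  smul_mem' := by
    intro r x hx
    simp only [Set.mem_setOf_eq] at *
    rw [TensorProduct.tmul_smul, map_smul, hx, TensorProduct.smul_tmul']

/-- the subspace `M ⊗ C` of `P ⊗ C` -/
def MCsub : Submodule k (P ⊗[k] C) :=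
  LinearMap.range (map (Msub k P C ψ e).subtype (LinearMap.id : C →ₗ[k] C))

variable (ρ : C ⊗[k] P →ₗ[k] P) (σ : C ⊗[k] C →ₗ[k] P)

/-- the map `ρ̂ : c ⊗ x ↦ ρ(c₍₁₎ ⊗ x_α) ⊗ c₍₂₎^α` -/
def rhat : C ⊗[k] P →ₗ[k] P ⊗[k] C :=
  map ρ LinearMap.id
    ∘ₗ (TensorProduct.assoc k C P C).symm.toLinearMap
    ∘ₗ map LinearMap.id ψ
    ∘ₗ (TensorProduct.assoc k C C P).toLinearMap
    ∘ₗ map (Δ k C) LinearMap.id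

/-- the map `σ̂ : b ⊗ c ↦ σ(b₍₁₎ ⊗ c_A) ⊗ b₍₂₎^A` -/
def shat : C ⊗[k] C →ₗ[k] P ⊗[k] C :=
  map σ LinearMap.id
    ∘ₗ (TensorProduct.assoc k C C C).symm.toLinearMap
    ∘ₗ map LinearMap.id ψC
    ∘ₗ (TensorProduct.assoc k C C C).toLinearMap
    ∘ₗ map (Δ k C) LinearMap.id

/-- multiplication of the first two factors: `x ⊗ (y ⊗ c) ↦ xy ⊗ c` -/
def mulPC : P ⊗[k] (P ⊗[k] C) →ₗ[k] P ⊗[k] C :=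
  map (μ k P) LinearMap.id ∘ₗ (TensorProduct.assoc k P P C).symm.toLinearMap

/-- the crossed product `(x ⊗ b)(y ⊗ c) = xρ(b₍₁₎⊗y_α)σ(b₍₂₎^α₍₁₎⊗c_A) ⊗ b₍₂₎^α₍₂₎^A` -/
def prodX : (P ⊗[k] C) ⊗[k] (P ⊗[k] C) →ₗ[k] P ⊗[k] C :=
  mulPC k P C
    ∘ₗ map LinearMap.id (mulPC k P C)
    ∘ₗ map LinearMap.id
        (map LinearMap.id (shat k P C ψC σ)
          ∘ₗ (TensorProduct.assoc k P C C).toLinearMap)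
    ∘ₗ map LinearMap.id
        (map (rhat k P C ψ ρ) LinearMap.id
          ∘ₗ (TensorProduct.assoc k C P C).symm.toLinearMap)
    ∘ₗ (TensorProduct.assoc k P C (P ⊗[k] C)).toLinearMap

/-- condition (i): `ρ(e,x) = x` for `x ∈ M` and `ρ(c,1) = ε(c)1` -/
def CondI : Prop :=
  (∀ x : P, x ∈ Msub k P C ψ e → ρ (e ⊗ₜ x) = x) ∧
    ∀ c : C, ρ (c ⊗ₜ (1 : P)) = ε k C c • (1 : P)

/-- condition (ii): `ρ̂` maps `C ⊗ M` into `M ⊗ C` -/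
def CondII : Prop :=
  ∀ (c : C) (x : P), x ∈ Msub k P C ψ e →
    rhat k P C ψ ρ (c ⊗ₜ x) ∈ MCsub k P C ψ e

/-- the right hand side of condition (iii): `(μ⊗id)∘(id⊗ρ̂)∘(ρ̂⊗id)` -/
def BmapIII : C ⊗[k] (P ⊗[k] P) →ₗ[k] P ⊗[k] C :=
  mulPC k P C
    ∘ₗ map LinearMap.id (rhat k P C ψ ρ)
    ∘ₗ (TensorProduct.assoc k P C P).toLinearMap
    ∘ₗ map (rhat k P C ψ ρ) LinearMap.id
    ∘ₗ (TensorProduct.assoc k C P P).symm.toLinearMap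

/-- condition (iii): twisted multiplicativity of `ρ` -/
def CondIII : Prop :=
  ∀ (c : C) (x y : P), x ∈ Msub k P C ψ e → y ∈ Msub k P C ψ e →
    rhat k P C ψ ρ (c ⊗ₜ (x * y)) = BmapIII k P C ψ ρ (c ⊗ₜ (x ⊗ₜ y))

/-- `σ` takes values in `M` -/
def SigmaIntoM : Prop := ∀ b c : C, σ (b ⊗ₜ c) ∈ Msub k P C ψ e

/-- condition (iv): `σ(e⊗c) = ε(c)1` and `σ(c₍₁₎⊗e_A) ⊗ c₍₂₎^A = 1 ⊗ c` -/
def CondIV : Prop :=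
  (∀ c : C, σ (e ⊗ₜ c) = ε k C c • (1 : P)) ∧
    ∀ c : C, shat k P C ψC σ (c ⊗ₜ e) = (1 : P) ⊗ₜ c

/-- `(ρ, σ)` are crossed product data: conditions (i)–(iv). -/
def IsCrossedData : Prop :=
  CondI k P C ψ e ρ ∧ CondII k P C ψ e ρ ∧ CondIII k P C ψ e ρ ∧
    SigmaIntoM k P C ψ e σ ∧ CondIV k P C e ψC σ

/-- left hand side of the cocycle condition (2.6) -/
def CocLHS : C ⊗[k] (C ⊗[k] C) →ₗ[k] P ⊗[k] C :=
  mulPC k P C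
    ∘ₗ map LinearMap.id (shat k P C ψC σ)
    ∘ₗ (TensorProduct.assoc k P C C).toLinearMap
    ∘ₗ map (rhat k P C ψ ρ) LinearMap.id
    ∘ₗ (TensorProduct.assoc k C P C).symm.toLinearMap
    ∘ₗ map LinearMap.id (shat k P C ψC σ)

/-- right hand side of the cocycle condition (2.6) -/
def CocRHS : C ⊗[k] (C ⊗[k] C) →ₗ[k] P ⊗[k] C :=
  mulPC k P C
    ∘ₗ map LinearMap.id (shat k P C ψC σ)
    ∘ₗ (TensorProduct.assoc k P C C).toLinearMap
    ∘ₗ map (shat k P C ψC σ) LinearMap.id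
    ∘ₗ (TensorProduct.assoc k C C C).symm.toLinearMap

/-- the cocycle condition (2.6) -/
def Cocycle : Prop := CocLHS k P C ψ ψC ρ σ = CocRHS k P C ψC σ

/-- left hand side of the twisted module condition (2.7) -/
def TwLHS : C ⊗[k] (C ⊗[k] P) →ₗ[k] P ⊗[k] C :=
  mulPC k P C
    ∘ₗ map LinearMap.id (shat k P C ψC σ)
    ∘ₗ (TensorProduct.assoc k P C C).toLinearMap
    ∘ₗ map (rhat k P C ψ ρ) LinearMap.id
    ∘ₗ (TensorProduct.assoc k C P C).symm.toLinearMap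
    ∘ₗ map LinearMap.id (rhat k P C ψ ρ)

/-- right hand side of the twisted module condition (2.7) -/
def TwRHS : C ⊗[k] (C ⊗[k] P) →ₗ[k] P ⊗[k] C :=
  mulPC k P C
    ∘ₗ map LinearMap.id (rhat k P C ψ ρ)
    ∘ₗ (TensorProduct.assoc k P C P).toLinearMap
    ∘ₗ map (shat k P C ψC σ) LinearMap.id
    ∘ₗ (TensorProduct.assoc k C C P).symm.toLinearMap

/-- the twisted module condition (2.7), for `x ∈ M` -/
def Twisted : Prop :=
  ∀ (a b : C) (x : P), x ∈ Msub k P C ψ e →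
    TwLHS k P C ψ ψC ρ σ (a ⊗ₜ (b ⊗ₜ x)) = TwRHS k P C ψ ψC ρ σ (a ⊗ₜ (b ⊗ₜ x))

end Entwine

namespace Entwine

section Gauge
variable (k : Type) [Field k] (P : Type) [Ring P] [Algebra k P]
    (C : Type) [AddCommGroup C] [Module k C] [Coalgebra k C]
    (ψ : C ⊗[k] P →ₗ[k] P ⊗[k] C) (e : C) (ψC : C ⊗[k] C →ₗ[k] C ⊗[k] C)
    (ρ : C ⊗[k] P →ₗ[k] P) (σ : C ⊗[k] C →ₗ[k] P)
    (γ γi : C →ₗ[k] P)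

/-- the covariance condition (2.16) for a gauge transformation `γ`:
`ψ^C₂₃∘ψ₁₂∘(id⊗γ⊗id)∘(id⊗Δ) = (γ⊗id⊗id)∘(Δ⊗id)∘ψ^C` -/
def Cov216 : Prop :=
  map LinearMap.id ψC
      ∘ₗ (TensorProduct.assoc k P C C).toLinearMap
      ∘ₗ map ψ LinearMap.id
      ∘ₗ (TensorProduct.assoc k C P C).symm.toLinearMap
      ∘ₗ map LinearMap.id (map γ LinearMap.id)
      ∘ₗ map LinearMap.id (Δ k C) =
    map γ LinearMap.id
      ∘ₗ (TensorProduct.assoc k C C C).toLinearMap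
      ∘ₗ map (Δ k C) LinearMap.id
      ∘ₗ ψC

/-- `ρ^γ(c ⊗ u) = γ(c₍₁₎) ρ(c₍₂₎ ⊗ u_α) γ⁻¹(c₍₃₎^α)` -/
def rhoGamma : C ⊗[k] P →ₗ[k] P :=
  μ k P
    ∘ₗ map γ (μ k P)
    ∘ₗ map LinearMap.id (map ρ γi)
    ∘ₗ map LinearMap.id (TensorProduct.assoc k C P C).symm.toLinearMap
    ∘ₗ map LinearMap.id (map LinearMap.id ψ)
    ∘ₗ map LinearMap.id (TensorProduct.assoc k C C P).toLinearMap
    ∘ₗ (TensorProduct.assoc k C (C ⊗[k] C) P).toLinearMap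
    ∘ₗ map (map LinearMap.id (Δ k C) ∘ₗ Δ k C) LinearMap.id

/-- `σ^γ(b ⊗ c) = γ(b₍₁₎) ρ(b₍₂₎ ⊗ γ(c_A₍₁₎)_α) σ(b₍₃₎^α ⊗ c_A₍₂₎) γ⁻¹(b₍₄₎^A)` -/
def sigmaGamma : C ⊗[k] C →ₗ[k] P :=
  μ k P
    ∘ₗ map γ LinearMap.id
    ∘ₗ map LinearMap.id (μ k P)
    ∘ₗ map LinearMap.id (map ρ (μ k P))
    ∘ₗ map LinearMap.id (TensorProduct.assoc k C P (P ⊗[k] P)).symm.toLinearMap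
    ∘ₗ map LinearMap.id (map LinearMap.id (map LinearMap.id (map σ γi)))
    ∘ₗ map LinearMap.id (map LinearMap.id
        (map LinearMap.id (TensorProduct.assoc k C C C).symm.toLinearMap))
    ∘ₗ map LinearMap.id (map LinearMap.id
        (TensorProduct.assoc k P C (C ⊗[k] C)).toLinearMap)
    ∘ₗ map LinearMap.id (map LinearMap.id (map ψ LinearMap.id))
    ∘ₗ map LinearMap.id (map LinearMap.id
        (TensorProduct.assoc k C P (C ⊗[k] C)).symm.toLinearMap)
    ∘ₗ map LinearMap.id (map LinearMap.id
        (map LinearMap.id (map γ LinearMap.id)))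
    ∘ₗ map LinearMap.id (map LinearMap.id
        (map LinearMap.id (TensorProduct.assoc k C C C).toLinearMap))
    ∘ₗ map LinearMap.id (map LinearMap.id
        (map LinearMap.id (map (Δ k C) LinearMap.id)))
    ∘ₗ map LinearMap.id (map LinearMap.id (map LinearMap.id ψC))
    ∘ₗ map LinearMap.id (map LinearMap.id (TensorProduct.assoc k C C C).toLinearMap)
    ∘ₗ map LinearMap.id (TensorProduct.assoc k C (C ⊗[k] C) C).toLinearMap
    ∘ₗ (TensorProduct.assoc k C (C ⊗[k] (C ⊗[k] C)) C).toLinearMap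
    ∘ₗ map (map LinearMap.id (map LinearMap.id (Δ k C))
        ∘ₗ map LinearMap.id (Δ k C) ∘ₗ Δ k C) LinearMap.id

/-- `Θ : x ⊗ c ↦ x γ(c₍₁₎) ⊗ c₍₂₎` -/
def ThetaGamma : P ⊗[k] C →ₗ[k] P ⊗[k] C :=
  mulPC k P C
    ∘ₗ map LinearMap.id (map γ LinearMap.id)
    ∘ₗ map LinearMap.id (Δ k C)

end Gauge

end Entwine

namespace Entwine

section Stmt15
variable (k : Type) [Field k] (P : Type) [Ring P] [Algebra k P]
    (C : Type) [AddCommGroup C] [Module k C] [Coalgebra k C]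
    (ψ : C ⊗[k] P →ₗ[k] P ⊗[k] C) (e : C) (ψC : C ⊗[k] C →ₗ[k] C ⊗[k] C)

/-- the covariance condition (2.19) for `Θ̃(c) = Θ(1 ⊗ c)`:
`ψ^C₂₃∘ψ₁₂∘(id⊗Θ̃) = (Θ̃⊗id)∘ψ^C` -/
def CovTheta (Θ : P ⊗[k] C →ₗ[k] P ⊗[k] C) : Prop :=
  (TensorProduct.assoc k P C C).symm.toLinearMap
      ∘ₗ map LinearMap.id ψC
      ∘ₗ (TensorProduct.assoc k P C C).toLinearMap
      ∘ₗ map ψ LinearMap.id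
      ∘ₗ (TensorProduct.assoc k C P C).symm.toLinearMap
      ∘ₗ map LinearMap.id (Θ ∘ₗ TensorProduct.mk k P C 1) =
    map (Θ ∘ₗ TensorProduct.mk k P C 1) LinearMap.id ∘ₗ ψC

/-- two crossed products `M ×_{ρ',σ'} C` and `M ×_{ρ,σ} C` are equivalent: there is
an algebra and left `M`-module isomorphism between them satisfying (2.19). -/
def EquivCrossed (ρ ρ' : C ⊗[k] P →ₗ[k] P) (σ σ' : C ⊗[k] C →ₗ[k] P) : Prop :=
  ∃ Θ : P ⊗[k] C →ₗ[k] P ⊗[k] C,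
    Set.BijOn Θ (MCsub k P C ψ e) (MCsub k P C ψ e) ∧
    (∀ x ∈ Msub k P C ψ e, ∀ w ∈ MCsub k P C ψ e,
      Θ (map (mulLeft k x) LinearMap.id w) = map (mulLeft k x) LinearMap.id (Θ w)) ∧
    Θ ((1 : P) ⊗ₜ e) = (1 : P) ⊗ₜ[k] e ∧
    (∀ u ∈ MCsub k P C ψ e, ∀ v ∈ MCsub k P C ψ e,
      Θ (prodX k P C ψ ψC ρ' σ' (u ⊗ₜ v)) = prodX k P C ψ ψC ρ σ (Θ u ⊗ₜ Θ v)) ∧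
    CovTheta k P C ψ ψC Θ

/-- the crossed product data `(ρ', σ')` is gauge equivalent to `(ρ, σ)`: for some
gauge transformation `γ`, `(ρ', σ')` is equivalent to `(ρ^γ, σ^γ)` in the sense
that `ρ̂' = ρ̂^γ` on `C ⊗ M` and `σ' = σ^γ`. -/
def GaugeEquiv (ρ ρ' : C ⊗[k] P →ₗ[k] P) (σ σ' : C ⊗[k] C →ₗ[k] P) : Prop :=
  ∃ γ γi : C →ₗ[k] P,
    (∀ c : C, γ c ∈ Msub k P C ψ e) ∧
    (∀ c : C, γi c ∈ Msub k P C ψ e) ∧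
    (μ k P ∘ₗ map γ γi ∘ₗ Δ k C = Algebra.linearMap k P ∘ₗ ε k C) ∧
    (μ k P ∘ₗ map γi γ ∘ₗ Δ k C = Algebra.linearMap k P ∘ₗ ε k C) ∧
    γ e = 1 ∧
    Cov216 k P C ψ ψC γ ∧
    (∀ (c : C) (x : P), x ∈ Msub k P C ψ e →
      rhat k P C ψ ρ' (c ⊗ₜ x) =
        rhat k P C ψ (rhoGamma k P C ψ ρ γ γi) (c ⊗ₜ x)) ∧
    (∀ b c : C, σ' (b ⊗ₜ c) = sigmaGamma k P C ψ ψC ρ σ γ γi (b ⊗ₜ c))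

end Stmt15

end Entwine

namespace Entwine

section Helpers

set_option linter.unusedSectionVars false

variable {k : Type} [Field k] {P : Type} [Ring P] [Algebra k P]
  {C : Type} [AddCommGroup C] [Module k C] [Coalgebra k C]
  {A : Type} [AddCommGroup A] [Module k A]
  {X : Type} [AddCommGroup X] [Module k X]
  {Y : Type} [AddCommGroup Y] [Module k Y]

/-- the map `c ⊗ a ↦ f(c₍₁₎ ⊗ a_τ) ⊗ c₍₂₎^τ` -/
def hat (τ : C ⊗[k] A →ₗ[k] A ⊗[k] C) (f : C ⊗[k] A →ₗ[k] X) : C ⊗[k] A →ₗ[k] X ⊗[k] C :=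
  map f LinearMap.id
    ∘ₗ (TensorProduct.assoc k C A C).symm.toLinearMap
    ∘ₗ map LinearMap.id τ
    ∘ₗ (TensorProduct.assoc k C C A).toLinearMap
    ∘ₗ map (Δ k C) LinearMap.id

/-- the cofree coaction `id ⊗ Δ` on `X ⊗ C` -/
def coact : X ⊗[k] C →ₗ[k] (X ⊗[k] C) ⊗[k] C :=
  (TensorProduct.assoc k X C C).symm.toLinearMap ∘ₗ map LinearMap.id (Δ k C)

/-- the map `id ⊗ ε` -/
def counitR : X ⊗[k] C →ₗ[k] X :=
  (TensorProduct.rid k X).toLinearMap ∘ₗ map LinearMap.id (ε k C)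

/-- compatibility of a twist map with the coproduct of `C` -/
def TwistComul (τ : C ⊗[k] A →ₗ[k] A ⊗[k] C) : Prop :=
  map LinearMap.id (Δ k C) ∘ₗ τ =
    (TensorProduct.assoc k A C C).toLinearMap
      ∘ₗ map τ LinearMap.id
      ∘ₗ (TensorProduct.assoc k C A C).symm.toLinearMap
      ∘ₗ map LinearMap.id τ
      ∘ₗ (TensorProduct.assoc k C C A).toLinearMap
      ∘ₗ map (Δ k C) LinearMap.id

theorem hat_comp (τ : C ⊗[k] A →ₗ[k] A ⊗[k] C) (f : C ⊗[k] A →ₗ[k] X) (g : X →ₗ[k] Y) :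
    hat τ (g ∘ₗ f) = map g LinearMap.id ∘ₗ hat τ f := by
  simp only [hat, ← LinearMap.comp_assoc, ← TensorProduct.map_comp, LinearMap.id_comp]

theorem counitR_hat {τ : C ⊗[k] A →ₗ[k] A ⊗[k] C}
    (hτ : (TensorProduct.rid k A).toLinearMap ∘ₗ map LinearMap.id (ε k C) ∘ₗ τ =
      (TensorProduct.lid k A).toLinearMap ∘ₗ map (ε k C) LinearMap.id)
    (f : C ⊗[k] A →ₗ[k] X) : counitR ∘ₗ hat τ f = f := by
  ext c a
  have key : ∀ t : C ⊗[k] C,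
      counitR (map f LinearMap.id ((TensorProduct.assoc k C A C).symm
        (map LinearMap.id τ (TensorProduct.assoc k C C A (t ⊗ₜ[k] a))))) =
      f (TensorProduct.rid k C (map LinearMap.id (ε k C) t) ⊗ₜ a) := by
    intro t
    induction t with
    | zero => simp
    | add x y hx hy => simp only [TensorProduct.add_tmul, map_add, hx, hy]
    | tmul c d =>
      have h := LinearMap.congr_fun hτ (d ⊗ₜ a)
      simp only [LinearMap.comp_apply, LinearEquiv.coe_coe, map_tmul, TensorProduct.lid_tmul,
        LinearMap.id_apply] at h
      have h2 : ∀ s : A ⊗[k] C, counitR (map f LinearMap.id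
          ((TensorProduct.assoc k C A C).symm (c ⊗ₜ[k] s))) =
          f (c ⊗ₜ TensorProduct.rid k A (map LinearMap.id (ε k C) s)) := by
        intro s
        induction s with
        | zero => simp
        | add x y hx hy => simp only [TensorProduct.tmul_add, map_add, hx, hy]
        | tmul a' c' => simp [counitR]
      simp [h2, h, TensorProduct.smul_tmul]
  have h := key (Δ k C c)
  simpa [hat, ← LinearMap.lTensor_def] using h

theorem coact_hat {τ : C ⊗[k] A →ₗ[k] A ⊗[k] C} (hτ : TwistComul τ)
    (f : C ⊗[k] A →ₗ[k] X) : coact ∘ₗ hat τ f = hat τ (hat τ f) := by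
  ext c a
  let Ψ : C ⊗[k] (C ⊗[k] C) →ₗ[k] (X ⊗[k] C) ⊗[k] C :=
    map (map f LinearMap.id ∘ₗ (TensorProduct.assoc k C A C).symm.toLinearMap) LinearMap.id
      ∘ₗ (TensorProduct.assoc k C (A ⊗[k] C) C).symm.toLinearMap
      ∘ₗ map LinearMap.id (map τ LinearMap.id
        ∘ₗ (TensorProduct.assoc k C A C).symm.toLinearMap
        ∘ₗ map LinearMap.id (τ ∘ₗ (TensorProduct.mk k C A).flip a))
  have h1 : ∀ t : C ⊗[k] C,
      coact (map f LinearMap.id ((TensorProduct.assoc k C A C).symm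
        (map LinearMap.id τ (TensorProduct.assoc k C C A (t ⊗ₜ[k] a))))) =
      Ψ (map LinearMap.id (Δ k C) t) := by
    intro t
    induction t with
    | zero => simp
    | add x y hx hy => simp only [TensorProduct.add_tmul, map_add, hx, hy]
    | tmul c d =>
      have h := LinearMap.congr_fun hτ (d ⊗ₜ a)
      have h2 : ∀ s : A ⊗[k] C, coact (map f LinearMap.id
          ((TensorProduct.assoc k C A C).symm (c ⊗ₜ[k] s))) =
          map (map f LinearMap.id ∘ₗ (TensorProduct.assoc k C A C).symm.toLinearMap) LinearMap.id
          ((TensorProduct.assoc k C (A ⊗[k] C) C).symm (c ⊗ₜ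
            (TensorProduct.assoc k A C C).symm (map LinearMap.id (Δ k C) s))) := by
        intro s
        induction s with
        | zero => simp
        | add x y hx hy => simp only [TensorProduct.tmul_add, map_add, hx, hy]
        | tmul a' c' =>
          simp only [coact, LinearMap.comp_apply, LinearEquiv.coe_coe, map_tmul,
            TensorProduct.assoc_symm_tmul, LinearMap.id_apply]
          induction Δ k C c' with
          | zero => simp
          | add x y hx hy => simp only [TensorProduct.tmul_add, map_add, hx, hy]
          | tmul p q => simp
      simp only [LinearMap.comp_apply, LinearEquiv.coe_coe, map_tmul, LinearMap.id_apply] at h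
      simp only [TensorProduct.assoc_tmul, map_tmul, LinearMap.id_apply, h2, h,
        LinearEquiv.symm_apply_apply, Ψ, LinearMap.comp_apply, LinearEquiv.coe_coe]
      induction Δ k C d with
      | zero => simp
      | add x y hx hy => simp only [TensorProduct.tmul_add, TensorProduct.add_tmul, map_add, hx, hy]
      | tmul p q => simp
  have h3 : ∀ t : C ⊗[k] C,
      map (hat τ f) LinearMap.id ((TensorProduct.assoc k C A C).symm
        (map LinearMap.id τ (TensorProduct.assoc k C C A (t ⊗ₜ[k] a)))) =
      Ψ (TensorProduct.assoc k C C C (map (Δ k C) LinearMap.id t)) := by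
    intro t
    induction t with
    | zero => simp
    | add x y hx hy => simp only [TensorProduct.add_tmul, map_add, hx, hy]
    | tmul c d =>
      have h4 : ∀ s : A ⊗[k] C,
          map (hat τ f) LinearMap.id ((TensorProduct.assoc k C A C).symm (c ⊗ₜ[k] s)) =
          map (map f LinearMap.id ∘ₗ (TensorProduct.assoc k C A C).symm.toLinearMap) LinearMap.id
          ((TensorProduct.assoc k C (A ⊗[k] C) C).symm
          (map LinearMap.id (map τ LinearMap.id ∘ₗ (TensorProduct.assoc k C A C).symm.toLinearMap)
            (TensorProduct.assoc k C C (A ⊗[k] C) (Δ k C c ⊗ₜ s)))) := by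
        intro s
        induction s with
        | zero => simp
        | add x y hx hy => simp only [TensorProduct.tmul_add, map_add, hx, hy]
        | tmul a' c' =>
          simp only [hat, LinearMap.comp_apply, LinearEquiv.coe_coe, map_tmul,
            TensorProduct.assoc_symm_tmul, LinearMap.id_apply]
          induction Δ k C c with
          | zero => simp
          | add x y hx hy => simp only [TensorProduct.add_tmul, map_add, hx, hy]
          | tmul p q => simp
      simp only [TensorProduct.assoc_tmul, map_tmul, LinearMap.id_apply, h4]
      induction Δ k C c with
      | zero => simp
      | add x y hx hy => simp only [TensorProduct.add_tmul, map_add, hx, hy]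
      | tmul p q => simp [Ψ]
  have h1' := h1 (Δ k C c)
  have h3' := h3 (Δ k C c)
  have hco := Coalgebra.coassoc_apply (R := k) c
  simp only [LinearMap.lTensor_def, LinearMap.rTensor_def] at hco
  rw [hco, ← h1'] at h3'
  exact h3'.symm

variable [Module P X] [IsScalarTower k P X] [Module P Y] [IsScalarTower k P Y]

/-- the map `b ⊗ a ↦ γ(b₍₁₎) f(b₍₂₎ ⊗ a)` -/
def convAct (γ : C →ₗ[k] P) (f : C ⊗[k] A →ₗ[k] X) : C ⊗[k] A →ₗ[k] X :=
  TensorProduct.lift ((Algebra.lsmul k k X).toLinearMap : P →ₗ[k] X →ₗ[k] X)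
    ∘ₗ map γ f ∘ₗ (TensorProduct.assoc k C C A).toLinearMap ∘ₗ map (Δ k C) LinearMap.id

theorem comp_convAct (γ : C →ₗ[k] P) (f : C ⊗[k] A →ₗ[k] X) (h : X →ₗ[k] Y)
    (hh : ∀ (p : P) (x : X), h (p • x) = p • h x) :
    h ∘ₗ convAct γ f = convAct γ (h ∘ₗ f) := by
  ext c a
  simp only [convAct, AlgebraTensorModule.curry_apply, LinearMap.restrictScalars_self,
    TensorProduct.curry_apply, LinearMap.comp_apply, LinearEquiv.coe_coe, map_tmul,
    LinearMap.id_apply]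
  induction Δ k C c with
  | zero => simp
  | add x y hx hy => simp only [TensorProduct.add_tmul, map_add, hx, hy]
  | tmul p q => simp [hh]

theorem hat_convAct (τ : C ⊗[k] A →ₗ[k] A ⊗[k] C) (γ : C →ₗ[k] P) (f : C ⊗[k] A →ₗ[k] X) :
    hat τ (convAct γ f) = convAct γ (hat τ f) := by
  ext c a
  let Ψ : C ⊗[k] (C ⊗[k] C) →ₗ[k] X ⊗[k] C :=
    TensorProduct.lift ((Algebra.lsmul k k (X ⊗[k] C)).toLinearMap :
        P →ₗ[k] X ⊗[k] C →ₗ[k] X ⊗[k] C)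
      ∘ₗ map γ (map f LinearMap.id ∘ₗ (TensorProduct.assoc k C A C).symm.toLinearMap
        ∘ₗ map LinearMap.id (τ ∘ₗ (TensorProduct.mk k C A).flip a))
  have h1 : ∀ t : C ⊗[k] C,
      map (convAct γ f) LinearMap.id ((TensorProduct.assoc k C A C).symm
        (map LinearMap.id τ (TensorProduct.assoc k C C A (t ⊗ₜ[k] a)))) =
      Ψ (TensorProduct.assoc k C C C (map (Δ k C) LinearMap.id t)) := by
    intro t
    induction t with
    | zero => simp
    | add x y hx hy => simp only [TensorProduct.add_tmul, map_add, hx, hy]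
    | tmul c d =>
      have h2 : ∀ s : A ⊗[k] C,
          map (convAct γ f) LinearMap.id ((TensorProduct.assoc k C A C).symm (c ⊗ₜ[k] s)) =
          TensorProduct.lift ((Algebra.lsmul k k (X ⊗[k] C)).toLinearMap :
            P →ₗ[k] X ⊗[k] C →ₗ[k] X ⊗[k] C)
          (map γ (map f LinearMap.id ∘ₗ (TensorProduct.assoc k C A C).symm.toLinearMap)
          (TensorProduct.assoc k C C (A ⊗[k] C) (Δ k C c ⊗ₜ s))) := by
        intro s
        induction s with
        | zero => simp
        | add x y hx hy => simp only [TensorProduct.tmul_add, map_add, hx, hy]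
        | tmul a' c' =>
          simp only [convAct, LinearMap.comp_apply, LinearEquiv.coe_coe, map_tmul,
            TensorProduct.assoc_symm_tmul, LinearMap.id_apply]
          induction Δ k C c with
          | zero => simp
          | add x y hx hy => simp only [TensorProduct.add_tmul, map_add, hx, hy]
          | tmul p q => simp [TensorProduct.smul_tmul']
      simp only [TensorProduct.assoc_tmul, map_tmul, LinearMap.id_apply, h2]
      induction Δ k C c with
      | zero => simp
      | add x y hx hy => simp only [TensorProduct.add_tmul, map_add, hx, hy]
      | tmul p q => simp [Ψ]
  have h3 : ∀ t : C ⊗[k] C,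
      TensorProduct.lift ((Algebra.lsmul k k (X ⊗[k] C)).toLinearMap :
        P →ₗ[k] X ⊗[k] C →ₗ[k] X ⊗[k] C)
        (map γ (hat τ f) (TensorProduct.assoc k C C A (t ⊗ₜ a))) =
      Ψ (map LinearMap.id (Δ k C) t) := by
    intro t
    induction t with
    | zero => simp
    | add x y hx hy => simp only [TensorProduct.add_tmul, map_add, hx, hy]
    | tmul c d =>
      simp only [TensorProduct.assoc_tmul, map_tmul, LinearMap.id_apply, hat,
        LinearMap.comp_apply, LinearEquiv.coe_coe]
      induction Δ k C d with
      | zero => simp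
      | add x y hx hy => simp only [TensorProduct.tmul_add, TensorProduct.add_tmul, map_add, hx, hy]
      | tmul p q => simp [Ψ]
  have h1' := h1 (Δ k C c)
  have h3' := h3 (Δ k C c)
  have hco := Coalgebra.coassoc_apply (R := k) c
  simp only [LinearMap.lTensor_def, LinearMap.rTensor_def] at hco
  rw [hco, ← h3'] at h1'
  exact h1'

/-- the map `c ↦ γ(c₍₁₎) ⊗ c₍₂₎` -/
def gaugeMap (γ : C →ₗ[k] P) : C →ₗ[k] P ⊗[k] C := map γ LinearMap.id ∘ₗ Δ k C

/-- the map `p ⊗ c ↦ p γ(c)` -/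
def mulGauge (γ : C →ₗ[k] P) : P ⊗[k] C →ₗ[k] P := μ k P ∘ₗ map LinearMap.id γ

theorem mulPC_tmul (p : P) (w : P ⊗[k] C) : mulPC k P C (p ⊗ₜ w) = p • w := by
  induction w with
  | zero => simp
  | add x y hx hy => simp only [TensorProduct.tmul_add, map_add, hx, hy, smul_add]
  | tmul q c => simp [mulPC, TensorProduct.smul_tmul']

theorem map_mulLeft (p : P) (w : P ⊗[k] C) :
    map (mulLeft k p) LinearMap.id w = p • w := by
  induction w with
  | zero => simp
  | add x y hx hy => simp only [map_add, hx, hy, smul_add]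
  | tmul q c => simp [TensorProduct.smul_tmul']

theorem thetaGamma_tmul (γ : C →ₗ[k] P) (p : P) (c : C) :
    ThetaGamma k P C γ (p ⊗ₜ c) = p • gaugeMap γ c := by
  simp [ThetaGamma, mulPC_tmul, gaugeMap]

theorem thetaGamma_smul (γ : C →ₗ[k] P) (p : P) (w : P ⊗[k] C) :
    ThetaGamma k P C γ (p • w) = p • ThetaGamma k P C γ w := by
  induction w with
  | zero => simp
  | add x y hx hy => simp only [map_add, hx, hy, smul_add]
  | tmul q c => simp [TensorProduct.smul_tmul', thetaGamma_tmul, mul_smul]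

theorem mulGauge_smul (γ : C →ₗ[k] P) (p : P) (w : P ⊗[k] C) :
    mulGauge γ (p • w) = p • mulGauge γ w := by
  induction w with
  | zero => simp
  | add x y hx hy => simp only [map_add, hx, hy, smul_add]
  | tmul q c => simp [TensorProduct.smul_tmul', mulGauge, mul_assoc]

theorem counitR_smul (p : P) (w : P ⊗[k] C) :
    counitR (p • w) = p • (counitR w : P) := by
  induction w with
  | zero => simp
  | add x y hx hy => simp only [map_add, hx, hy, smul_add]
  | tmul q c => simp [TensorProduct.smul_tmul', counitR]

theorem map_mulGauge_coact (γ : C →ₗ[k] P) (w : P ⊗[k] C) :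
    map (mulGauge γ) LinearMap.id (coact w) = ThetaGamma k P C γ w := by
  induction w with
  | zero => simp
  | add x y hx hy => simp only [map_add, hx, hy]
  | tmul q c =>
    simp only [thetaGamma_tmul, gaugeMap, coact, LinearMap.comp_apply, map_tmul,
      LinearEquiv.coe_coe, LinearMap.id_apply]
    induction Δ k C c with
    | zero => simp
    | add x y hx hy => simp only [TensorProduct.tmul_add, map_add, hx, hy, smul_add]
    | tmul a b => simp [mulGauge, TensorProduct.smul_tmul']

theorem map_mulGauge_comp_coact (γ : C →ₗ[k] P) :
    map (mulGauge γ) LinearMap.id ∘ₗ coact = ThetaGamma k P C γ :=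
  LinearMap.ext (map_mulGauge_coact γ)

theorem coact_smul (p : P) (w : P ⊗[k] C) : coact (p • w) = p • coact w := by
  induction w with
  | zero => simp
  | add x y hx hy => simp only [map_add, hx, hy, smul_add]
  | tmul q c =>
    simp only [coact, LinearMap.comp_apply, map_tmul, TensorProduct.smul_tmul',
      LinearEquiv.coe_coe, LinearMap.id_apply]
    induction Δ k C c with
    | zero => simp
    | add x y hx hy => simp only [TensorProduct.tmul_add, map_add, hx, hy, smul_add]
    | tmul a b => simp [TensorProduct.smul_tmul']

theorem coact_gaugeMap (γ : C →ₗ[k] P) (c : C) :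
    coact (gaugeMap γ c) = map (gaugeMap γ) LinearMap.id (Δ k C c) := by
  have hco := Coalgebra.coassoc_apply (R := k) c
  simp only [LinearMap.lTensor_def, LinearMap.rTensor_def] at hco
  have h1 : ∀ t : C ⊗[k] C, coact (map γ LinearMap.id t) =
      map (map γ LinearMap.id) LinearMap.id
        ((TensorProduct.assoc k C C C).symm (map LinearMap.id (Δ k C) t)) := by
    intro t
    induction t with
    | zero => simp
    | add x y hx hy => simp only [map_add, hx, hy]
    | tmul a b =>
      simp only [coact, LinearMap.comp_apply, map_tmul, LinearEquiv.coe_coe, LinearMap.id_apply]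
      induction Δ k C b with
      | zero => simp
      | add x y hx hy => simp only [TensorProduct.tmul_add, map_add, hx, hy]
      | tmul p q => simp
  rw [gaugeMap, LinearMap.comp_apply, h1, ← hco, LinearEquiv.symm_apply_apply,
    ← LinearMap.comp_apply, ← TensorProduct.map_comp, LinearMap.id_comp]

theorem map_counitR_coact (w : X ⊗[k] C) : map counitR LinearMap.id (coact w) = w := by
  induction w with
  | zero => simp
  | add x y hx hy => simp only [map_add, hx, hy]
  | tmul q c =>
    have h : ∀ t : C ⊗[k] C, map counitR LinearMap.id ((TensorProduct.assoc k X C C).symm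
        (q ⊗ₜ[k] t)) = q ⊗ₜ[k] (TensorProduct.lid k C (map (ε k C) LinearMap.id t)) := by
      intro t
      induction t with
      | zero => simp
      | add x y hx hy => simp only [TensorProduct.tmul_add, map_add, hx, hy]
      | tmul a b => simp [counitR, TensorProduct.smul_tmul]
    have h' := h (Δ k C c)
    simpa [coact, ← LinearMap.rTensor_def] using h'

theorem map_counitR_comp_coact :
    map counitR LinearMap.id ∘ₗ coact = (LinearMap.id : X ⊗[k] C →ₗ[k] X ⊗[k] C) :=
  LinearMap.ext map_counitR_coact

theorem eq_gaugeMap_of_coact (v : C →ₗ[k] P ⊗[k] C)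
    (hv : ∀ c, coact (v c) = map v LinearMap.id (Δ k C c)) : v = gaugeMap (counitR ∘ₗ v) := by
  ext c
  rw [← map_counitR_coact (v c), hv, gaugeMap]
  rw [LinearMap.comp_apply, ← LinearMap.comp_apply, ← TensorProduct.map_comp, LinearMap.id_comp]

theorem counitR_thetaGamma (γ : C →ₗ[k] P) (w : P ⊗[k] C) :
    counitR (ThetaGamma k P C γ w) = mulGauge γ w := by
  induction w with
  | zero => simp
  | add x y hx hy => simp only [map_add, hx, hy]
  | tmul q c =>
    have h : ∀ t : C ⊗[k] C, counitR (map γ LinearMap.id t) =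
        γ (TensorProduct.rid k C (map LinearMap.id (ε k C) t)) := by
      intro t
      induction t with
      | zero => simp
      | add x y hx hy => simp only [map_add, hx, hy]
      | tmul a b => simp [counitR]
    rw [thetaGamma_tmul, counitR_smul, gaugeMap, LinearMap.comp_apply, h]
    simp [mulGauge, ← LinearMap.lTensor_def]

theorem coact_thetaGamma (γ : C →ₗ[k] P) (w : P ⊗[k] C) :
    coact (ThetaGamma k P C γ w) = map (ThetaGamma k P C γ) LinearMap.id (coact w) := by
  induction w with
  | zero => simp
  | add x y hx hy => simp only [map_add, hx, hy]
  | tmul q c =>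
    rw [thetaGamma_tmul, coact_smul, coact_gaugeMap]
    simp only [coact, LinearMap.comp_apply, map_tmul, LinearEquiv.coe_coe, LinearMap.id_apply]
    induction Δ k C c with
    | zero => simp
    | add x y hx hy => simp only [TensorProduct.tmul_add, map_add, hx, hy, smul_add]
    | tmul a b => simp [thetaGamma_tmul, TensorProduct.smul_tmul']

theorem mulGauge_gaugeMap (γ γi : C →ₗ[k] P) (c : C) :
    mulGauge γ (gaugeMap γi c) = μ k P (map γi γ (Δ k C c)) := by
  simp only [mulGauge, gaugeMap, ← LinearMap.comp_apply, LinearMap.comp_assoc]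
  simp only [LinearMap.comp_apply]
  congr 1
  simp only [← LinearMap.comp_apply, ← LinearMap.comp_assoc, ← TensorProduct.map_comp,
    LinearMap.id_comp, LinearMap.comp_id]

theorem thetaGamma_thetaGamma {γ γi : C →ₗ[k] P}
    (h : μ k P ∘ₗ map γi γ ∘ₗ Δ k C = Algebra.linearMap k P ∘ₗ ε k C) (w : P ⊗[k] C) :
    ThetaGamma k P C γ (ThetaGamma k P C γi w) = w := by
  rw [← map_mulGauge_coact, coact_thetaGamma, ← LinearMap.comp_apply, ← TensorProduct.map_comp,
    LinearMap.id_comp]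
  have h2 : mulGauge γ ∘ₗ ThetaGamma k P C γi = counitR := by
    ext p c
    have h' := LinearMap.congr_fun h c
    simp only [LinearMap.comp_apply] at h'
    simp [thetaGamma_tmul, mulGauge_smul, mulGauge_gaugeMap, h', counitR,
      Algebra.algebraMap_eq_smul_one]
  rw [h2, map_counitR_coact]

section Products

variable {ψ : C ⊗[k] P →ₗ[k] P ⊗[k] C} {ψC : C ⊗[k] C →ₗ[k] C ⊗[k] C} {e : C}
  (ρ : C ⊗[k] P →ₗ[k] P) (σ : C ⊗[k] C →ₗ[k] P) (γ γi : C →ₗ[k] P)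

theorem rhat_eq_hat : rhat k P C ψ ρ = hat ψ ρ := rfl

theorem shat_eq_hat : shat k P C ψC σ = hat ψC σ := rfl

variable (ψC) in
/-- the map `(p ⊗ b) ⊗ c ↦ p σ̂(b ⊗ c)` -/
def mulShat : (P ⊗[k] C) ⊗[k] C →ₗ[k] P ⊗[k] C :=
  mulPC k P C ∘ₗ map LinearMap.id (shat k P C ψC σ) ∘ₗ (TensorProduct.assoc k P C C).toLinearMap

theorem mulShat_tmul (p : P) (b c : C) :
    mulShat ψC σ ((p ⊗ₜ b) ⊗ₜ c) = p • shat k P C ψC σ (b ⊗ₜ c) := by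
  simp [mulShat, mulPC_tmul]

theorem mulShat_smul (p : P) (w : P ⊗[k] C) (c : C) :
    mulShat ψC σ ((p • w) ⊗ₜ c) = p • mulShat ψC σ (w ⊗ₜ c) := by
  induction w with
  | zero => simp
  | add x y hx hy => simp only [TensorProduct.add_tmul, map_add, hx, hy, smul_add]
  | tmul q d => simp [TensorProduct.smul_tmul', mulShat_tmul, mul_smul]

theorem prodX_tmul (p y : P) (b c : C) :
    prodX k P C ψ ψC ρ σ ((p ⊗ₜ b) ⊗ₜ (y ⊗ₜ c)) =
      p • mulShat ψC σ (rhat k P C ψ ρ (b ⊗ₜ y) ⊗ₜ c) := by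
  simp [prodX, mulPC_tmul, mulShat]

theorem prodX_smul (p : P) (u v : P ⊗[k] C) :
    prodX k P C ψ ψC ρ σ ((p • u) ⊗ₜ v) = p • prodX k P C ψ ψC ρ σ (u ⊗ₜ v) := by
  induction u with
  | zero => simp
  | add x y hx hy => simp only [TensorProduct.add_tmul, map_add, hx, hy, smul_add]
  | tmul q d =>
    induction v with
    | zero => simp
    | add x y hx hy => simp only [TensorProduct.tmul_add, map_add, hx, hy, smul_add]
    | tmul y c => simp [TensorProduct.smul_tmul', prodX_tmul, mul_smul]

/-- the map `b ⊗ w ↦ (1 ⊗ b) w` -/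
def actX (ψ : C ⊗[k] P →ₗ[k] P ⊗[k] C) (ψC : C ⊗[k] C →ₗ[k] C ⊗[k] C)
    (ρ : C ⊗[k] P →ₗ[k] P) (σ : C ⊗[k] C →ₗ[k] P) : C ⊗[k] (P ⊗[k] C) →ₗ[k] P ⊗[k] C :=
  mulShat ψC σ ∘ₗ map (rhat k P C ψ ρ) LinearMap.id
    ∘ₗ (TensorProduct.assoc k C P C).symm.toLinearMap

theorem prodX_tmul_left (p : P) (b : C) (w : P ⊗[k] C) :
    prodX k P C ψ ψC ρ σ ((p ⊗ₜ b) ⊗ₜ w) = p • actX ψ ψC ρ σ (b ⊗ₜ w) := by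
  induction w with
  | zero => simp
  | add x y hx hy => simp only [TensorProduct.tmul_add, map_add, hx, hy, smul_add]
  | tmul y c => simp [prodX_tmul, actX]

theorem prodX_gaugeMap (b : C) (c : C) :
    prodX k P C ψ ψC ρ σ (gaugeMap γ b ⊗ₜ gaugeMap γ c) =
      convAct γ (actX ψ ψC ρ σ ∘ₗ map LinearMap.id (gaugeMap γ)) (b ⊗ₜ c) := by
  simp only [convAct, LinearMap.comp_apply, LinearEquiv.coe_coe, map_tmul, LinearMap.id_apply]
  rw [gaugeMap, LinearMap.comp_apply]
  induction Δ k C b with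
  | zero => simp
  | add x y hx hy => simp only [TensorProduct.add_tmul, map_add, hx, hy]
  | tmul p q => simp [prodX_tmul_left]

/-- the map `b ⊗ (p ⊗ c) ↦ p_α ⊗ ψ^C(b^α ⊗ c)` -/
def twistPC (ψ : C ⊗[k] P →ₗ[k] P ⊗[k] C) (ψC : C ⊗[k] C →ₗ[k] C ⊗[k] C) :
    C ⊗[k] (P ⊗[k] C) →ₗ[k] (P ⊗[k] C) ⊗[k] C :=
  (TensorProduct.assoc k P C C).symm.toLinearMap
      ∘ₗ map LinearMap.id ψC
      ∘ₗ (TensorProduct.assoc k P C C).toLinearMap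
      ∘ₗ map ψ LinearMap.id
      ∘ₗ (TensorProduct.assoc k C P C).symm.toLinearMap

theorem coact_mulShat (hψC : TwistComul ψC) (w : P ⊗[k] C) (d : C) :
    coact (mulShat ψC σ (w ⊗ₜ d)) =
      map (mulShat ψC σ) LinearMap.id ((TensorProduct.assoc k (P ⊗[k] C) C C).symm
        (map LinearMap.id ψC (TensorProduct.assoc k (P ⊗[k] C) C C (coact w ⊗ₜ d)))) := by
  induction w with
  | zero => simp
  | add x y hx hy => simp only [TensorProduct.add_tmul, map_add, hx, hy]
  | tmul p b =>
    rw [mulShat_tmul, coact_smul, shat_eq_hat, ← LinearMap.comp_apply coact, coact_hat hψC]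
    simp only [hat.eq_1 ψC (hat ψC σ), coact, LinearMap.comp_apply, LinearEquiv.coe_coe, map_tmul,
      LinearMap.id_apply]
    induction Δ k C b with
    | zero => simp
    | add x y hx hy => simp only [TensorProduct.add_tmul, TensorProduct.tmul_add, map_add, hx, hy,
        smul_add]
    | tmul a b =>
      simp only [TensorProduct.assoc_tmul, TensorProduct.assoc_symm_tmul, map_tmul,
        LinearMap.id_apply]
      induction ψC (b ⊗ₜ[k] d) with
      | zero => simp
      | add x y hx hy => simp only [TensorProduct.tmul_add, map_add, hx, hy, smul_add]
      | tmul x y => simp [mulShat_tmul, shat_eq_hat, TensorProduct.smul_tmul']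

theorem coact_actX (hψ : TwistComul ψ) (hψC : TwistComul ψC) (b : C) (w : P ⊗[k] C) :
    coact (actX ψ ψC ρ σ (b ⊗ₜ w)) =
      map (actX ψ ψC ρ σ) LinearMap.id ((TensorProduct.assoc k C (P ⊗[k] C) C).symm
        (map LinearMap.id (twistPC ψ ψC)
          (TensorProduct.assoc k C C (P ⊗[k] C) (Δ k C b ⊗ₜ w)))) := by
  induction w with
  | zero => simp
  | add x y hx hy => simp only [TensorProduct.tmul_add, map_add, hx, hy]
  | tmul p d =>
    simp only [actX, LinearMap.comp_apply, LinearEquiv.coe_coe, map_tmul, LinearMap.id_apply,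
      TensorProduct.assoc_symm_tmul]
    rw [coact_mulShat σ hψC, rhat_eq_hat, ← LinearMap.comp_apply coact, coact_hat hψ]
    simp only [hat.eq_1 ψ (hat ψ ρ), LinearMap.comp_apply, LinearEquiv.coe_coe, map_tmul,
      LinearMap.id_apply]
    induction Δ k C b with
    | zero => simp
    | add x y hx hy => simp only [TensorProduct.add_tmul, map_add, hx, hy]
    | tmul a b =>
      simp only [TensorProduct.assoc_tmul, TensorProduct.assoc_symm_tmul, map_tmul,
        LinearMap.id_apply, twistPC, LinearMap.comp_apply, LinearEquiv.coe_coe]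
      induction ψ (b ⊗ₜ[k] p) with
      | zero => simp
      | add x y hx hy => simp only [TensorProduct.add_tmul, TensorProduct.tmul_add, map_add, hx, hy]
      | tmul y b' =>
        simp only [TensorProduct.assoc_tmul, TensorProduct.assoc_symm_tmul, map_tmul,
          LinearMap.id_apply]
        induction ψC (b' ⊗ₜ[k] d) with
        | zero => simp
        | add x y hx hy => simp only [TensorProduct.tmul_add, map_add, hx, hy]
        | tmul x y => simp

theorem cov216_iff : Cov216 k P C ψ ψC γ ↔
    twistPC ψ ψC ∘ₗ map LinearMap.id (gaugeMap γ) = map (gaugeMap γ) LinearMap.id ∘ₗ ψC := by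
  have h1 : ∀ t : C ⊗[k] C, map γ LinearMap.id (TensorProduct.assoc k C C C
      (map (Δ k C) LinearMap.id t)) =
      TensorProduct.assoc k P C C (map (gaugeMap γ) LinearMap.id t) := by
    intro t
    induction t with
    | zero => simp
    | add x y hx hy => simp only [map_add, hx, hy]
    | tmul a b =>
      simp only [map_tmul, gaugeMap, LinearMap.comp_apply, LinearMap.id_apply]
      induction Δ k C a with
      | zero => simp
      | add x y hx hy => simp only [TensorProduct.add_tmul, map_add, hx, hy]
      | tmul p q => simp
  constructor
  · intro h
    ext b c
    have h' := LinearMap.congr_fun h (b ⊗ₜ c)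
    simp only [LinearMap.comp_apply, LinearEquiv.coe_coe, h1] at h'
    simp only [AlgebraTensorModule.curry_apply, LinearMap.restrictScalars_self,
      TensorProduct.curry_apply, twistPC, LinearMap.comp_apply, LinearEquiv.coe_coe]
    rw [LinearEquiv.symm_apply_eq, ← h']
    simp [gaugeMap]
  · intro h
    refine TensorProduct.ext' fun b c => ?_
    have h' := LinearMap.congr_fun h (b ⊗ₜ c)
    simp only [twistPC, LinearMap.comp_apply, LinearEquiv.coe_coe] at h'
    rw [LinearEquiv.symm_apply_eq] at h'
    simp only [LinearMap.comp_apply, LinearEquiv.coe_coe, h1]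
    rw [← h']
    simp [gaugeMap]

theorem coact_actX_gaugeMap (hψ : TwistComul ψ) (hψC : TwistComul ψC)
    (hγ : Cov216 k P C ψ ψC γ) :
    coact ∘ₗ actX ψ ψC ρ σ ∘ₗ map LinearMap.id (gaugeMap γ) =
      hat ψC (actX ψ ψC ρ σ ∘ₗ map LinearMap.id (gaugeMap γ)) := by
  rw [cov216_iff] at hγ
  refine TensorProduct.ext' fun b c => ?_
  simp only [LinearMap.comp_apply, map_tmul, LinearMap.id_apply, coact_actX ρ σ hψ hψC, hat,
    LinearEquiv.coe_coe]
  induction Δ k C b with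
  | zero => simp
  | add x y hx hy => simp only [TensorProduct.add_tmul, map_add, hx, hy]
  | tmul p q =>
    have h' := LinearMap.congr_fun hγ (q ⊗ₜ c)
    simp only [LinearMap.comp_apply, map_tmul, LinearMap.id_apply] at h'
    simp only [TensorProduct.assoc_tmul, map_tmul, LinearMap.id_apply, h']
    induction ψC (q ⊗ₜ[k] c) with
    | zero => simp
    | add x y hx hy => simp only [TensorProduct.tmul_add, map_add, hx, hy]
    | tmul x y => simp

theorem rhoGamma_eq : rhoGamma k P C ψ ρ γ γi = convAct γ (mulGauge γi ∘ₗ rhat k P C ψ ρ) := by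
  refine TensorProduct.ext' fun b u => ?_
  simp only [rhoGamma, convAct, LinearMap.comp_apply, map_tmul, LinearMap.id_apply,
    LinearEquiv.coe_coe]
  induction Δ k C b with
  | zero => simp
  | add x y hx hy => simp only [TensorProduct.add_tmul, map_add, hx, hy]
  | tmul p q =>
    simp only [TensorProduct.assoc_tmul, map_tmul, LinearMap.id_apply, rhat, LinearMap.comp_apply,
      LinearEquiv.coe_coe]
    induction Δ k C q with
    | zero => simp
    | add x y hx hy =>
      simp only [TensorProduct.add_tmul, TensorProduct.tmul_add, map_add, hx, hy]
    | tmul r s =>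
      simp only [TensorProduct.assoc_tmul, map_tmul, LinearMap.id_apply]
      induction ψ (s ⊗ₜ[k] u) with
      | zero => simp
      | add x y hx hy => simp only [TensorProduct.tmul_add, map_add, hx, hy]
      | tmul x y => simp [mulGauge]

theorem rhat_rhoGamma (hψ : TwistComul ψ) :
    rhat k P C ψ (rhoGamma k P C ψ ρ γ γi) =
      ThetaGamma k P C γi ∘ₗ convAct γ (rhat k P C ψ ρ) := by
  rw [comp_convAct _ _ _ (thetaGamma_smul γi), rhoGamma_eq, rhat_eq_hat, rhat_eq_hat,
    hat_convAct, hat_comp, ← coact_hat hψ, ← LinearMap.comp_assoc, map_mulGauge_comp_coact]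

/-- the map `b ⊗ c ↦ (γ(b₍₁₎) ⊗ b₍₂₎)(γ(c₍₁₎) ⊗ c₍₂₎)` -/
def gaugeProd (ψ : C ⊗[k] P →ₗ[k] P ⊗[k] C) (ψC : C ⊗[k] C →ₗ[k] C ⊗[k] C)
    (ρ : C ⊗[k] P →ₗ[k] P) (σ : C ⊗[k] C →ₗ[k] P) (γ : C →ₗ[k] P) : C ⊗[k] C →ₗ[k] P ⊗[k] C :=
  convAct γ (actX ψ ψC ρ σ ∘ₗ map LinearMap.id (gaugeMap γ))

theorem counitR_mulShat
    (hε : (TensorProduct.rid k C).toLinearMap ∘ₗ map LinearMap.id (ε k C) ∘ₗ ψC =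
      (TensorProduct.lid k C).toLinearMap ∘ₗ map (ε k C) LinearMap.id) :
    counitR ∘ₗ mulShat ψC σ =
      μ k P ∘ₗ map LinearMap.id σ ∘ₗ (TensorProduct.assoc k P C C).toLinearMap := by
  ext p b c
  have h := LinearMap.congr_fun (counitR_hat hε σ) (b ⊗ₜ c)
  simp only [LinearMap.comp_apply] at h
  simp [mulShat_tmul, counitR_smul, shat_eq_hat, h]

/-- the map `b ⊗ (d ⊗ (c ⊗ a)) ↦ ρ(b ⊗ γ(c₍₁₎)_α) σ(d^α ⊗ c₍₂₎) γ⁻¹(a)` -/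
def sigmaTailAux (ψ : C ⊗[k] P →ₗ[k] P ⊗[k] C) (ρ : C ⊗[k] P →ₗ[k] P) (σ : C ⊗[k] C →ₗ[k] P)
    (γ γi : C →ₗ[k] P) : C ⊗[k] (C ⊗[k] (C ⊗[k] C)) →ₗ[k] P :=
  μ k P
    ∘ₗ map ρ (μ k P)
    ∘ₗ (TensorProduct.assoc k C P (P ⊗[k] P)).symm.toLinearMap
    ∘ₗ map LinearMap.id (map LinearMap.id (map σ γi))
    ∘ₗ map LinearMap.id (map LinearMap.id (TensorProduct.assoc k C C C).symm.toLinearMap)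
    ∘ₗ map LinearMap.id (TensorProduct.assoc k P C (C ⊗[k] C)).toLinearMap
    ∘ₗ map LinearMap.id (map ψ LinearMap.id)
    ∘ₗ map LinearMap.id (TensorProduct.assoc k C P (C ⊗[k] C)).symm.toLinearMap
    ∘ₗ map LinearMap.id (map LinearMap.id (map γ LinearMap.id))
    ∘ₗ map LinearMap.id (map LinearMap.id (TensorProduct.assoc k C C C).toLinearMap)
    ∘ₗ map LinearMap.id (map LinearMap.id (map (Δ k C) LinearMap.id))

/-- the map `b ⊗ (d ⊗ a) ↦ ρ(b ⊗ γ(c_A₍₁₎)_α) σ(d^α ⊗ c_A₍₂₎) γ⁻¹(a^A)` -/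
def sigmaTail (ψ : C ⊗[k] P →ₗ[k] P ⊗[k] C) (ψC : C ⊗[k] C →ₗ[k] C ⊗[k] C)
    (ρ : C ⊗[k] P →ₗ[k] P) (σ : C ⊗[k] C →ₗ[k] P) (γ γi : C →ₗ[k] P) (c : C) :
    C ⊗[k] (C ⊗[k] C) →ₗ[k] P :=
  sigmaTailAux ψ ρ σ γ γi
    ∘ₗ map LinearMap.id (map LinearMap.id (ψC ∘ₗ (TensorProduct.mk k C C).flip c))

theorem mulGauge_hat_eq (c : C) (t : C ⊗[k] C) :
    mulGauge γi (map ((μ k P ∘ₗ map LinearMap.id σ ∘ₗ (TensorProduct.assoc k P C C).toLinearMap)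
      ∘ₗ map (rhat k P C ψ ρ) LinearMap.id ∘ₗ (TensorProduct.assoc k C P C).symm.toLinearMap
      ∘ₗ map LinearMap.id (gaugeMap γ)) LinearMap.id ((TensorProduct.assoc k C C C).symm
        (map LinearMap.id ψC (TensorProduct.assoc k C C C (t ⊗ₜ[k] c))))) =
    sigmaTail ψ ψC ρ σ γ γi c (TensorProduct.assoc k C C C (map (Δ k C) LinearMap.id t)) := by
  induction t with
  | zero => simp
  | add x y hx hy => simp only [TensorProduct.add_tmul, map_add, hx, hy]
  | tmul b d =>
    have h : ∀ (r : C ⊗[k] C) (s : C ⊗[k] C), mulGauge γi (map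
          ((μ k P ∘ₗ map LinearMap.id σ ∘ₗ (TensorProduct.assoc k P C C).toLinearMap)
          ∘ₗ map (map ρ LinearMap.id ∘ₗ (TensorProduct.assoc k C P C).symm.toLinearMap
            ∘ₗ map LinearMap.id ψ ∘ₗ (TensorProduct.assoc k C C P).toLinearMap) LinearMap.id
          ∘ₗ (TensorProduct.assoc k (C ⊗[k] C) P C).symm.toLinearMap
          ∘ₗ map LinearMap.id (gaugeMap γ)) LinearMap.id
          ((TensorProduct.assoc k (C ⊗[k] C) C C).symm (r ⊗ₜ[k] s))) =
        sigmaTailAux ψ ρ σ γ γi (TensorProduct.assoc k C C (C ⊗[k] C) (r ⊗ₜ s)) := by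
      intro r s
      induction s with
      | zero => simp
      | add x y hx hy => simp only [TensorProduct.tmul_add, map_add, hx, hy]
      | tmul c' b' =>
        induction r with
        | zero => simp
        | add x y hx hy => simp only [TensorProduct.add_tmul, map_add, hx, hy]
        | tmul p q =>
          simp only [TensorProduct.assoc_tmul, TensorProduct.assoc_symm_tmul, map_tmul,
            LinearMap.id_apply, LinearMap.comp_apply, LinearEquiv.coe_coe, gaugeMap, sigmaTailAux]
          induction Δ k C c' with
          | zero => simp
          | add x y hx hy =>
            simp only [TensorProduct.tmul_add, TensorProduct.add_tmul, map_add, hx, hy]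
          | tmul x y =>
            simp only [TensorProduct.assoc_tmul, TensorProduct.assoc_symm_tmul, map_tmul,
              LinearMap.id_apply, LinearMap.comp_apply, LinearEquiv.coe_coe]
            induction ψ (q ⊗ₜ[k] γ x) with
            | zero => simp
            | add x y hx hy =>
              simp only [TensorProduct.tmul_add, TensorProduct.add_tmul, map_add, hx, hy]
            | tmul z w => simp [mulGauge, mul_assoc]
    simp only [TensorProduct.assoc_tmul, map_tmul, LinearMap.id_apply, sigmaTail,
      LinearMap.comp_apply]
    have h5 : ∀ s : C ⊗[k] C, map ((μ k P ∘ₗ map LinearMap.id σ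
          ∘ₗ (TensorProduct.assoc k P C C).toLinearMap)
          ∘ₗ map (rhat k P C ψ ρ) LinearMap.id ∘ₗ (TensorProduct.assoc k C P C).symm.toLinearMap
          ∘ₗ map LinearMap.id (gaugeMap γ)) LinearMap.id
          ((TensorProduct.assoc k C C C).symm (b ⊗ₜ[k] s)) = map
          ((μ k P ∘ₗ map LinearMap.id σ ∘ₗ (TensorProduct.assoc k P C C).toLinearMap)
          ∘ₗ map (map ρ LinearMap.id ∘ₗ (TensorProduct.assoc k C P C).symm.toLinearMap
            ∘ₗ map LinearMap.id ψ ∘ₗ (TensorProduct.assoc k C C P).toLinearMap) LinearMap.id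
          ∘ₗ (TensorProduct.assoc k (C ⊗[k] C) P C).symm.toLinearMap
          ∘ₗ map LinearMap.id (gaugeMap γ)) LinearMap.id
          ((TensorProduct.assoc k (C ⊗[k] C) C C).symm (Δ k C b ⊗ₜ[k] s)) := by
      intro s
      induction s with
      | zero => simp
      | add x y hx hy => simp only [TensorProduct.tmul_add, map_add, hx, hy]
      | tmul c' b' =>
        simp only [TensorProduct.assoc_symm_tmul, map_tmul, LinearMap.id_apply,
          LinearMap.comp_apply, LinearEquiv.coe_coe]
        induction gaugeMap γ c' with
        | zero => simp
        | add x y hx hy => simp only [TensorProduct.tmul_add, TensorProduct.add_tmul, map_add, hx, hy]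
        | tmul x y => simp [rhat]
    rw [h5, h]
    induction Δ k C b with
    | zero => simp
    | add x y hx hy => simp only [TensorProduct.add_tmul, map_add, hx, hy]
    | tmul x y => simp

theorem sigmaGamma_eq (hψ : TwistComul ψ) (hψC : TwistComul ψC)
    (hε : (TensorProduct.rid k C).toLinearMap ∘ₗ map LinearMap.id (ε k C) ∘ₗ ψC =
      (TensorProduct.lid k C).toLinearMap ∘ₗ map (ε k C) LinearMap.id)
    (hγ : Cov216 k P C ψ ψC γ) :
    sigmaGamma k P C ψ ψC ρ σ γ γi = mulGauge γi ∘ₗ gaugeProd ψ ψC ρ σ γ := by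
  have hG : actX ψ ψC ρ σ ∘ₗ map LinearMap.id (gaugeMap γ) =
      hat ψC ((μ k P ∘ₗ map LinearMap.id σ ∘ₗ (TensorProduct.assoc k P C C).toLinearMap)
      ∘ₗ map (rhat k P C ψ ρ) LinearMap.id ∘ₗ (TensorProduct.assoc k C P C).symm.toLinearMap
      ∘ₗ map LinearMap.id (gaugeMap γ)) := by
    have h := hat_comp ψC (actX ψ ψC ρ σ ∘ₗ map LinearMap.id (gaugeMap γ)) counitR
    rw [← coact_actX_gaugeMap ρ σ γ hψ hψC hγ, ← LinearMap.comp_assoc _ coact _,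
      map_counitR_comp_coact, LinearMap.id_comp] at h
    rw [← h, ← counitR_mulShat σ hε]
    rfl
  rw [gaugeProd, comp_convAct _ _ _ (mulGauge_smul γi), hG]
  refine TensorProduct.ext' fun b c => ?_
  have h2 : ∀ q : C, (mulGauge γi ∘ₗ hat ψC ((μ k P ∘ₗ map LinearMap.id σ
      ∘ₗ (TensorProduct.assoc k P C C).toLinearMap)
      ∘ₗ map (rhat k P C ψ ρ) LinearMap.id ∘ₗ (TensorProduct.assoc k C P C).symm.toLinearMap
      ∘ₗ map LinearMap.id (gaugeMap γ))) (q ⊗ₜ c) =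
      sigmaTail ψ ψC ρ σ γ γi c (map LinearMap.id (Δ k C) (Δ k C q)) := by
    intro q
    have hco := Coalgebra.coassoc_apply (R := k) q
    simp only [LinearMap.lTensor_def, LinearMap.rTensor_def] at hco
    rw [← hco, ← mulGauge_hat_eq]
    rfl
  simp only [convAct, LinearMap.comp_apply, map_tmul, LinearMap.id_apply,
    LinearEquiv.coe_coe, sigmaGamma]
  induction Δ k C b with
  | zero => simp
  | add x y hx hy => simp only [TensorProduct.add_tmul, map_add, hx, hy]
  | tmul p q =>
    simp only [TensorProduct.assoc_tmul, map_tmul, h2, LinearMap.id_apply]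
    induction Δ k C q with
    | zero => simp
    | add x y hx hy =>
      simp only [TensorProduct.add_tmul, TensorProduct.tmul_add, map_add, hx, hy]
    | tmul r s =>
      simp only [map_tmul, LinearMap.id_apply]
      induction Δ k C s with
      | zero => simp
      | add x y hx hy =>
        simp only [TensorProduct.add_tmul, TensorProduct.tmul_add, map_add, hx, hy]
      | tmul t u => simp [sigmaTail, sigmaTailAux]

theorem shat_sigmaGamma (hψ : TwistComul ψ) (hψC : TwistComul ψC)
    (hε : (TensorProduct.rid k C).toLinearMap ∘ₗ map LinearMap.id (ε k C) ∘ₗ ψC =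
      (TensorProduct.lid k C).toLinearMap ∘ₗ map (ε k C) LinearMap.id)
    (hγ : Cov216 k P C ψ ψC γ) :
    shat k P C ψC (sigmaGamma k P C ψ ψC ρ σ γ γi) =
      ThetaGamma k P C γi ∘ₗ gaugeProd ψ ψC ρ σ γ := by
  rw [sigmaGamma_eq ρ σ γ γi hψ hψC hε hγ, shat_eq_hat, hat_comp, gaugeProd, hat_convAct,
    ← coact_actX_gaugeMap ρ σ γ hψ hψC hγ, ← comp_convAct _ _ _ coact_smul, ← LinearMap.comp_assoc,
    map_mulGauge_comp_coact]

end Products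

end Helpers

end Entwine

namespace Entwine

section Submodules

set_option linter.unusedSectionVars false

variable {k : Type} [Field k] {P : Type} [Ring P] [Algebra k P]
  {C : Type} [AddCommGroup C] [Module k C] [Coalgebra k C]
  {ψ : C ⊗[k] P →ₗ[k] P ⊗[k] C} {ψC : C ⊗[k] C →ₗ[k] C ⊗[k] C} {e : C}

theorem mem_Msub {x : P} : x ∈ Msub k P C ψ e ↔ ψ (e ⊗ₜ x) = x ⊗ₜ e := Iff.rfl

theorem one_mem_Msub (h : AxOne k P C ψ) : (1 : P) ∈ Msub k P C ψ e := h e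

theorem mul_mem_Msub (h : AxMul k P C ψ) {x y : P} (hx : x ∈ Msub k P C ψ e)
    (hy : y ∈ Msub k P C ψ e) : x * y ∈ Msub k P C ψ e := by
  rw [mem_Msub] at *
  have h' := LinearMap.congr_fun h (e ⊗ₜ (x ⊗ₜ y))
  simpa [hx, hy] using h'

theorem MCsub_induction {p : P ⊗[k] C → Prop} (h0 : p 0) (hadd : ∀ x y, p x → p y → p (x + y))
    (h : ∀ m ∈ Msub k P C ψ e, ∀ c, p (m ⊗ₜ c)) {w : P ⊗[k] C} (hw : w ∈ MCsub k P C ψ e) :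
    p w := by
  obtain ⟨t, rfl⟩ := hw
  induction t with
  | zero => simpa using h0
  | add x y hx hy => rw [map_add]; exact hadd _ _ hx hy
  | tmul m c => exact h m m.2 c

theorem tmul_mem_MCsub {m : P} (hm : m ∈ Msub k P C ψ e) (c : C) :
    m ⊗ₜ[k] c ∈ MCsub k P C ψ e :=
  ⟨⟨m, hm⟩ ⊗ₜ c, by simp⟩

theorem map_mem_MCsub {A : Type} [AddCommGroup A] [Module k A] {f : A →ₗ[k] P}
    (hf : ∀ a, f a ∈ Msub k P C ψ e) (w : A ⊗[k] C) :
    map f LinearMap.id w ∈ MCsub k P C ψ e := by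
  induction w with
  | zero => simp
  | add x y hx hy => rw [map_add]; exact add_mem hx hy
  | tmul a c => exact tmul_mem_MCsub (hf a) c

theorem smul_mem_MCsub (h : AxMul k P C ψ) {m : P} (hm : m ∈ Msub k P C ψ e) {w : P ⊗[k] C}
    (hw : w ∈ MCsub k P C ψ e) : m • w ∈ MCsub k P C ψ e := by
  refine MCsub_induction (p := fun w => m • w ∈ MCsub k P C ψ e) (by simp) ?_ ?_ hw
  · intro x y hx hy
    rw [smul_add]
    exact add_mem hx hy
  · intro n hn c
    exact tmul_mem_MCsub (mul_mem_Msub h hm hn) c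

theorem counitR_mem_Msub {w : P ⊗[k] C} (hw : w ∈ MCsub k P C ψ e) :
    counitR w ∈ Msub k P C ψ e := by
  refine MCsub_induction (p := fun w => counitR w ∈ Msub k P C ψ e) (by simp) ?_ ?_ hw
  · intro x y hx hy
    rw [map_add]
    exact add_mem hx hy
  · intro n hn c
    simpa [counitR] using Submodule.smul_mem _ _ hn

theorem gaugeMap_mem_MCsub {γ : C →ₗ[k] P} (hγ : ∀ c, γ c ∈ Msub k P C ψ e) (c : C) :
    gaugeMap γ c ∈ MCsub k P C ψ e :=
  map_mem_MCsub hγ _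

theorem thetaGamma_mem_MCsub (h : AxMul k P C ψ) {γ : C →ₗ[k] P}
    (hγ : ∀ c, γ c ∈ Msub k P C ψ e) {w : P ⊗[k] C} (hw : w ∈ MCsub k P C ψ e) :
    ThetaGamma k P C γ w ∈ MCsub k P C ψ e := by
  refine MCsub_induction (p := fun w => ThetaGamma k P C γ w ∈ MCsub k P C ψ e) (by simp) ?_ ?_ hw
  · intro x y hx hy
    rw [map_add]
    exact add_mem hx hy
  · intro n hn c
    rw [thetaGamma_tmul]
    exact smul_mem_MCsub h hn (gaugeMap_mem_MCsub hγ c)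

theorem gaugeMap_grouplike (hΔe : Δ k C e = e ⊗ₜ e) (γ : C →ₗ[k] P) :
    gaugeMap γ e = γ e ⊗ₜ e := by
  simp [gaugeMap, hΔe]

theorem twistPC_grouplike (hψC : AxPsiCUnit k C e ψC) {w : P ⊗[k] C}
    (hw : w ∈ MCsub k P C ψ e) : twistPC ψ ψC (e ⊗ₜ w) = coact w := by
  refine MCsub_induction (p := fun w => twistPC ψ ψC (e ⊗ₜ w) = coact w) (by simp) ?_ ?_ hw
  · intro x y hx hy
    simp only [TensorProduct.tmul_add, map_add, hx, hy]
  · intro n hn c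
    simp [twistPC, coact, mem_Msub.1 hn, hψC c]

theorem mulShat_grouplike {σ : C ⊗[k] C →ₗ[k] P} (hσ : CondIV k P C e ψC σ) (w : P ⊗[k] C) :
    mulShat ψC σ (w ⊗ₜ e) = w := by
  induction w with
  | zero => simp
  | add x y hx hy => simp only [TensorProduct.add_tmul, map_add, hx, hy]
  | tmul p c => rw [mulShat_tmul, hσ.2 c, TensorProduct.smul_tmul', smul_eq_mul, mul_one]

theorem prodX_gaugeMap_grouplike (γ : C →ₗ[k] P)
    (ρ : C ⊗[k] P →ₗ[k] P) (σ : C ⊗[k] C →ₗ[k] P) (b : C) (y : P)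
    (hσ : CondIV k P C e ψC σ) :
    prodX k P C ψ ψC ρ σ (gaugeMap γ b ⊗ₜ (y ⊗ₜ e)) =
      convAct γ (rhat k P C ψ ρ) (b ⊗ₜ y) := by
  simp only [convAct, LinearMap.comp_apply, LinearEquiv.coe_coe, map_tmul, LinearMap.id_apply]
  rw [gaugeMap, LinearMap.comp_apply]
  induction Δ k C b with
  | zero => simp
  | add x y hx hy => simp only [TensorProduct.add_tmul, map_add, hx, hy]
  | tmul p q => simp [prodX_tmul, mulShat_grouplike hσ]

theorem rhat_tmul_one (h1 : AxOne k P C ψ) {ρ : C ⊗[k] P →ₗ[k] P} (hρ : CondI k P C ψ e ρ)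
    (c : C) : rhat k P C ψ ρ (c ⊗ₜ 1) = 1 ⊗ₜ c := by
  have key : ∀ t : C ⊗[k] C, map ρ LinearMap.id ((TensorProduct.assoc k C P C).symm
      (map LinearMap.id ψ (TensorProduct.assoc k C C P (t ⊗ₜ[k] (1 : P))))) =
      (1 : P) ⊗ₜ TensorProduct.lid k C (map (ε k C) LinearMap.id t) := by
    intro t
    induction t with
    | zero => simp
    | add x y hx hy => simp only [TensorProduct.add_tmul, TensorProduct.tmul_add, map_add, hx, hy]
    | tmul a b => simp [h1 b, hρ.2 a, TensorProduct.smul_tmul]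
  have h := key (Δ k C c)
  simpa [rhat, ← LinearMap.rTensor_def] using h

/-- `((1 ⊗ b)(y ⊗ e))w = (1 ⊗ b)(y w)` with `b` twisted by `γ`. -/
theorem prodX_convAct {ρ : C ⊗[k] P →ₗ[k] P} (hρ : CondIII k P C ψ e ρ)
    (σ : C ⊗[k] C →ₗ[k] P) (γ : C →ₗ[k] P) (b : C) {y : P} (hy : y ∈ Msub k P C ψ e)
    {w : P ⊗[k] C} (hw : w ∈ MCsub k P C ψ e) :
    prodX k P C ψ ψC ρ σ (convAct γ (rhat k P C ψ ρ) (b ⊗ₜ y) ⊗ₜ w) =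
      prodX k P C ψ ψC ρ σ (gaugeMap γ b ⊗ₜ (y • w)) := by
  simp only [convAct, LinearMap.comp_apply, LinearEquiv.coe_coe, map_tmul, LinearMap.id_apply]
  rw [gaugeMap, LinearMap.comp_apply]
  induction Δ k C b with
  | zero => simp
  | add x y hx hy => simp only [TensorProduct.add_tmul, map_add, hx, hy]
  | tmul p q =>
    refine MCsub_induction (p := fun w => prodX k P C ψ ψC ρ σ (TensorProduct.lift
      (Algebra.lsmul k k (P ⊗[k] C)).toLinearMap (map γ (rhat k P C ψ ρ)
        (TensorProduct.assoc k C C P ((p ⊗ₜ q) ⊗ₜ y))) ⊗ₜ w) =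
      prodX k P C ψ ψC ρ σ (map γ LinearMap.id (p ⊗ₜ q) ⊗ₜ (y • w))) (by simp) ?_ ?_ hw
    · intro x y hx hy
      simp only [TensorProduct.tmul_add, smul_add, map_add, hx, hy]
    · intro z hz c
      have h := hρ q y z hy hz
      have h2 : ∀ s : P ⊗[k] C, prodX k P C ψ ψC ρ σ (s ⊗ₜ (z ⊗ₜ c)) =
          mulShat ψC σ (mulPC k P C (map LinearMap.id (rhat k P C ψ ρ)
            (TensorProduct.assoc k P C P (s ⊗ₜ z))) ⊗ₜ c) := by
        intro s
        induction s with
        | zero => simp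
        | add x y hx hy => simp only [TensorProduct.add_tmul, map_add, hx, hy]
        | tmul a d => simp [prodX_tmul, mulPC_tmul, mulShat_smul]
      have h3 : BmapIII k P C ψ ρ (q ⊗ₜ (y ⊗ₜ z)) =
          mulPC k P C (map LinearMap.id (rhat k P C ψ ρ)
            (TensorProduct.assoc k P C P (rhat k P C ψ ρ (q ⊗ₜ y) ⊗ₜ z))) := by
        simp [BmapIII]
      have h4 := prodX_smul (ψ := ψ) (ψC := ψC) ρ σ (γ p) (rhat k P C ψ ρ (q ⊗ₜ y)) (z ⊗ₜ c)
      rw [h2 (rhat k P C ψ ρ (q ⊗ₜ y)), ← h3, ← h] at h4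
      simpa only [TensorProduct.assoc_tmul, map_tmul, lift.tmul, AlgHom.toLinearMap_apply,
        Algebra.lsmul_coe, LinearMap.id_apply, prodX_tmul, TensorProduct.smul_tmul',
        smul_eq_mul] using h4

theorem shat_mem_MCsub {σ : C ⊗[k] C →ₗ[k] P} (hσ : SigmaIntoM k P C ψ e σ) (t : C ⊗[k] C) :
    shat k P C ψC σ t ∈ MCsub k P C ψ e := by
  refine map_mem_MCsub (fun a => ?_) _
  induction a with
  | zero => simp
  | add x y hx hy => rw [map_add]; exact add_mem hx hy
  | tmul b c => exact hσ b c

/-- A bijective gauge map on `M ⊗ C` has a convolution inverse with values in `M`. -/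
theorem exists_convInverse (hmul : AxMul k P C ψ) (hone : AxOne k P C ψ) {γ : C →ₗ[k] P}
    (hγ : ∀ c, γ c ∈ Msub k P C ψ e)
    (hbij : Set.BijOn (ThetaGamma k P C γ) (MCsub k P C ψ e) (MCsub k P C ψ e)) :
    ∃ γi : C →ₗ[k] P, (∀ c, γi c ∈ Msub k P C ψ e) ∧
      (μ k P ∘ₗ map γ γi ∘ₗ Δ k C = Algebra.linearMap k P ∘ₗ ε k C) ∧
      (μ k P ∘ₗ map γi γ ∘ₗ Δ k C = Algebra.linearMap k P ∘ₗ ε k C) := by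
  obtain ⟨g, hg⟩ := LinearMap.exists_leftInverse_of_injective
    (ThetaGamma k P C γ ∘ₗ (MCsub k P C ψ e).subtype)
    (LinearMap.ker_eq_bot.2 fun x y h => Subtype.ext (hbij.injOn x.2 y.2 h))
  have hone' : ∀ c : C, (1 : P) ⊗ₜ[k] c ∈ MCsub k P C ψ e :=
    fun c => tmul_mem_MCsub (one_mem_Msub hone) c
  let v : C →ₗ[k] P ⊗[k] C := (MCsub k P C ψ e).subtype ∘ₗ g ∘ₗ TensorProduct.mk k P C 1
  have hvmem : ∀ c, v c ∈ MCsub k P C ψ e := fun c => (g _).2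
  have hθv : ∀ c, ThetaGamma k P C γ (v c) = 1 ⊗ₜ c := by
    intro c
    obtain ⟨w, hw, hwc⟩ := hbij.surjOn (hone' c)
    have h : g (1 ⊗ₜ c) = ⟨w, hw⟩ := by
      rw [← hwc]
      exact LinearMap.congr_fun hg ⟨w, hw⟩
    change ThetaGamma k P C γ (g (1 ⊗ₜ c) : P ⊗[k] C) = _
    rw [h]
    exact hwc
  have hrange : ∀ w ∈ MCsub k P C ψ e, ∃ z : MCsub k P C ψ e ⊗[k] C,
      map (MCsub k P C ψ e).subtype LinearMap.id z = coact w := by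
    intro w hw
    refine MCsub_induction (p := fun w => ∃ z : MCsub k P C ψ e ⊗[k] C,
      map (MCsub k P C ψ e).subtype LinearMap.id z = coact w) ⟨0, by simp⟩ ?_ ?_ hw
    · rintro x y ⟨a, ha⟩ ⟨b, hb⟩
      exact ⟨a + b, by rw [map_add, map_add, ha, hb]⟩
    · intro m hm c
      have h : ∀ t : C ⊗[k] C, ∃ z : MCsub k P C ψ e ⊗[k] C,
          map (MCsub k P C ψ e).subtype LinearMap.id z =
            (TensorProduct.assoc k P C C).symm (m ⊗ₜ t) := by
        intro t
        induction t with
        | zero => exact ⟨0, by simp⟩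
        | add x y hx hy =>
          obtain ⟨a, ha⟩ := hx
          obtain ⟨b, hb⟩ := hy
          exact ⟨a + b, by rw [map_add, ha, hb, TensorProduct.tmul_add, map_add]⟩
        | tmul a b => exact ⟨⟨m ⊗ₜ a, tmul_mem_MCsub hm a⟩ ⊗ₜ b, by simp⟩
      simpa [coact] using h (Δ k C c)
  have hv : v = gaugeMap (counitR ∘ₗ v) := by
    refine eq_gaugeMap_of_coact v fun c => ?_
    obtain ⟨z, hz⟩ := hrange (v c) (hvmem c)
    have h1 : map ((MCsub k P C ψ e).subtype ∘ₗ g) LinearMap.id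
        (map (ThetaGamma k P C γ) LinearMap.id (coact (v c))) = coact (v c) := by
      rw [← hz, ← LinearMap.comp_apply, ← LinearMap.comp_apply, ← TensorProduct.map_comp,
        ← TensorProduct.map_comp, LinearMap.comp_assoc, LinearMap.comp_assoc, hg,
        LinearMap.comp_id, LinearMap.id_comp, LinearMap.id_comp]
    rw [← h1, ← coact_thetaGamma, hθv]
    simp only [coact, LinearMap.comp_apply, map_tmul, LinearMap.id_apply, LinearEquiv.coe_coe]
    induction Δ k C c with
    | zero => simp
    | add x y hx hy => simp only [TensorProduct.tmul_add, map_add, hx, hy]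
    | tmul a b => simp [v]
  have hγi : ∀ c, (counitR ∘ₗ v) c ∈ Msub k P C ψ e := fun c => counitR_mem_Msub (hvmem c)
  have hinv : μ k P ∘ₗ map (counitR ∘ₗ v) γ ∘ₗ Δ k C = Algebra.linearMap k P ∘ₗ ε k C := by
    ext c
    have h := congrArg counitR (hθv c)
    rw [counitR_thetaGamma, hv, mulGauge_gaugeMap] at h
    rw [LinearMap.comp_apply, LinearMap.comp_apply, h]
    simp [counitR, Algebra.algebraMap_eq_smul_one]
  refine ⟨counitR ∘ₗ v, hγi, ?_, hinv⟩
  ext c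
  have h1 : ThetaGamma k P C (counitR ∘ₗ v) (gaugeMap γ c) = 1 ⊗ₜ c := by
    refine hbij.injOn (thetaGamma_mem_MCsub hmul hγi (gaugeMap_mem_MCsub hγ c)) (hone' c) ?_
    rw [thetaGamma_thetaGamma hinv, thetaGamma_tmul, one_smul]
  have h := congrArg counitR h1
  rw [counitR_thetaGamma, mulGauge_gaugeMap] at h
  rw [LinearMap.comp_apply, LinearMap.comp_apply, h]
  simp [counitR, Algebra.algebraMap_eq_smul_one]

end Submodules

end Entwine

namespace Entwine

section Stmt15
variable (k : Type) [Field k] (P : Type) [Ring P] [Algebra k P]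
    (C : Type) [AddCommGroup C] [Module k C] [Coalgebra k C]
    (ψ : C ⊗[k] P →ₗ[k] P ⊗[k] C) (e : C) (ψC : C ⊗[k] C →ₗ[k] C ⊗[k] C)

/-- (Proposition 3.2) Two crossed products built on the same
entwining data are equivalent if and only if their crossed product data are gauge
equivalent. -/
theorem equiv_iff_gauge_equiv
    (ρ ρ' : C ⊗[k] P →ₗ[k] P) (σ σ' : C ⊗[k] C →ₗ[k] P)
    (hdata : IsEntwiningData k P C ψ e ψC)
    (hcross : IsCrossedData k P C ψ e ψC ρ σ)
    (hcoc : Cocycle k P C ψ ψC ρ σ)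
    (htw : Twisted k P C ψ e ψC ρ σ)
    (hcross' : IsCrossedData k P C ψ e ψC ρ' σ')
    (hcoc' : Cocycle k P C ψ ψC ρ' σ')
    (htw' : Twisted k P C ψ e ψC ρ' σ') :
    EquivCrossed k P C ψ e ψC ρ ρ' σ σ' ↔ GaugeEquiv k P C ψ e ψC ρ ρ' σ σ' := by
  obtain ⟨⟨hmul, hone, hcomul, -⟩, ⟨hΔe, hεe⟩, hCcomul, hCcounit, hCunit⟩ := hdata
  obtain ⟨-, -, hIII, -, hIV⟩ := hcross
  obtain ⟨hI', hII', -, hσ', hIV'⟩ := hcross'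
  have hone' : ∀ c : C, (1 : P) ⊗ₜ[k] c ∈ MCsub k P C ψ e :=
    fun c => tmul_mem_MCsub (one_mem_Msub hone) c
  constructor
  · rintro ⟨Θ, hbij, hlin, hΘe, hΘmul, hcov⟩
    have hv : Θ ∘ₗ TensorProduct.mk k P C 1 =
        gaugeMap (counitR ∘ₗ Θ ∘ₗ TensorProduct.mk k P C 1) := by
      refine eq_gaugeMap_of_coact _ fun c => ?_
      have h := LinearMap.congr_fun hcov (e ⊗ₜ c)
      rw [LinearMap.comp_apply (map _ _), hCunit c] at h
      exact (twistPC_grouplike hCunit (hbij.mapsTo (hone' c))).symm.trans h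
    set γ : C →ₗ[k] P := counitR ∘ₗ Θ ∘ₗ TensorProduct.mk k P C 1 with hγdef
    have hv' : ∀ c, Θ (1 ⊗ₜ c) = gaugeMap γ c := fun c => LinearMap.congr_fun hv c
    have hΘ : Set.EqOn Θ (ThetaGamma k P C γ) (MCsub k P C ψ e) := by
      intro w hw
      refine MCsub_induction (p := fun w => Θ w = ThetaGamma k P C γ w) (by simp) ?_ ?_ hw
      · intro x y hx hy
        rw [map_add, map_add, hx, hy]
      · intro m hm c
        have h := hlin m hm (1 ⊗ₜ c) (hone' c)
        rw [map_mulLeft, map_mulLeft, hv', TensorProduct.smul_tmul', smul_eq_mul, mul_one] at h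
        rw [h, thetaGamma_tmul]
    have hγ : ∀ c, γ c ∈ Msub k P C ψ e :=
      fun c => counitR_mem_Msub (hbij.mapsTo (hone' c))
    have hγe : γ e = 1 := by
      rw [hγdef, LinearMap.comp_apply, LinearMap.comp_apply, TensorProduct.mk_apply, hΘe]
      simp [counitR, hεe]
    obtain ⟨γi, hγi, hinv, hinv'⟩ :=
      exists_convInverse hmul hone hγ (hbij.congr hΘ)
    have hcov' : Cov216 k P C ψ ψC γ := by
      rw [cov216_iff, ← hv]
      exact hcov
    refine ⟨γ, γi, hγ, hγi, hinv, hinv', hγe, hcov', ?_, ?_⟩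
    · intro c x hx
      have h := hΘmul _ (hone' c) _ (tmul_mem_MCsub hx e)
      rw [prodX_tmul, one_smul, mulShat_grouplike hIV', hΘ (hII' c x hx), hv',
        hΘ (tmul_mem_MCsub hx e), thetaGamma_tmul, gaugeMap_grouplike hΔe, hγe,
        TensorProduct.smul_tmul', smul_eq_mul, mul_one,
        prodX_gaugeMap_grouplike _ _ _ _ _ hIV] at h
      rw [rhat_rhoGamma _ _ _ hcomul, LinearMap.comp_apply, ← h, thetaGamma_thetaGamma hinv]
    · intro b c
      have h := hΘmul _ (hone' b) _ (hone' c)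
      rw [prodX_tmul, one_smul, rhat_tmul_one hone hI', mulShat_tmul, one_smul,
        hΘ (shat_mem_MCsub hσ' _), hv', hv', prodX_gaugeMap] at h
      have h2 := congrArg (ThetaGamma k P C γi) h
      rw [thetaGamma_thetaGamma hinv] at h2
      have h3 := LinearMap.congr_fun (counitR_hat hCcounit σ') (b ⊗ₜ c)
      rw [LinearMap.comp_apply, ← shat_eq_hat, h2, counitR_thetaGamma] at h3
      rw [sigmaGamma_eq _ _ _ _ hcomul hCcomul hCcounit hcov', ← h3]
      rfl
  · rintro ⟨γ, γi, hγ, hγi, hinv, hinv', hγe, hcov, hρ, hσ⟩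
    have hmk : ThetaGamma k P C γ ∘ₗ TensorProduct.mk k P C 1 = gaugeMap γ := by
      ext c
      simp [thetaGamma_tmul]
    refine ⟨ThetaGamma k P C γ, ⟨?_, ?_, ?_⟩, ?_, ?_, ?_, ?_⟩
    · exact fun w hw => thetaGamma_mem_MCsub hmul hγ hw
    · intro x _ y _ h
      rw [← thetaGamma_thetaGamma hinv x, h, thetaGamma_thetaGamma hinv]
    · exact fun w hw => ⟨_, thetaGamma_mem_MCsub hmul hγi hw, thetaGamma_thetaGamma hinv' w⟩
    · intro x _ w _
      rw [map_mulLeft, map_mulLeft, thetaGamma_smul]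
    · rw [thetaGamma_tmul, gaugeMap_grouplike hΔe, hγe, one_smul]
    · have hσs : shat k P C ψC σ' = ThetaGamma k P C γi ∘ₗ gaugeProd ψ ψC ρ σ γ := by
        rw [← shat_sigmaGamma _ _ _ _ hcomul hCcomul hCcounit hcov, TensorProduct.ext' hσ]
      have hK : ∀ (w : P ⊗[k] C) (c : C), ThetaGamma k P C γ (mulShat ψC σ' (w ⊗ₜ c)) =
          prodX k P C ψ ψC ρ σ (ThetaGamma k P C γ w ⊗ₜ gaugeMap γ c) := by
        intro w c
        induction w with
        | zero => simp
        | add x y hx hy => simp only [TensorProduct.add_tmul, map_add, hx, hy]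
        | tmul p d =>
          rw [mulShat_tmul, thetaGamma_smul, hσs, LinearMap.comp_apply,
            thetaGamma_thetaGamma hinv', thetaGamma_tmul, prodX_smul, prodX_gaugeMap]
          rfl
      intro u hu v hv
      refine MCsub_induction (p := fun u => ThetaGamma k P C γ (prodX k P C ψ ψC ρ' σ' (u ⊗ₜ v)) =
        prodX k P C ψ ψC ρ σ (ThetaGamma k P C γ u ⊗ₜ ThetaGamma k P C γ v)) (by simp) ?_ ?_ hu
      · intro x y hx hy
        simp only [TensorProduct.add_tmul, map_add, hx, hy]
      intro m _ b
      refine MCsub_induction (p := fun v => ThetaGamma k P C γ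
        (prodX k P C ψ ψC ρ' σ' ((m ⊗ₜ b) ⊗ₜ v)) = prodX k P C ψ ψC ρ σ
          (ThetaGamma k P C γ (m ⊗ₜ b) ⊗ₜ ThetaGamma k P C γ v)) (by simp) ?_ ?_ hv
      · intro x y hx hy
        simp only [TensorProduct.tmul_add, map_add, hx, hy]
      intro y hy c
      rw [prodX_tmul, thetaGamma_smul, hK, hρ b y hy, rhat_rhoGamma _ _ _ hcomul,
        LinearMap.comp_apply, thetaGamma_thetaGamma hinv',
        prodX_convAct hIII σ γ b hy (gaugeMap_mem_MCsub hγ c), thetaGamma_tmul, thetaGamma_tmul,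
        prodX_smul]
    · rw [CovTheta, hmk]
      exact (cov216_iff γ).1 hcov

end Stmt15

end Entwine
end
end

section
/- Let q ∈ k* and let P = E_q(2) be the k-algebra generated by v, v⁻¹, n, n̄ with relations vn = q²nv, vn̄ = q²n̄v, nn̄ = q²n̄n, vv⁻¹ = v⁻¹v = 1. Let C be the coalgebra with basis of group-like elements {c_p : p ∈ ℤ}, fix s ∈ ℤ and μ, ν ∈ k*, and let ψ : C ⊗ P → P ⊗ C be determined on generators by ψ(c_p ⊗ v) = v ⊗ c_{p+1}, ψ(c_p ⊗ v⁻¹) = v⁻¹ ⊗ c_{p−1}, ψ(c_p ⊗ n) = n ⊗ c_p + μq^{2p}v ⊗ c_p − μq^{2p}v ⊗ c_{p+1}, ψ(c_p ⊗ n̄) = n̄ ⊗ c_p + νq^{2p}v⁻¹ ⊗ c_p − νq^{2p}v⁻¹ ⊗ c_{p−1}, extended by ψ∘(id ⊗ μ_P) = (μ_P ⊗ id)∘ψ₂₃∘ψ₁₂ and ψ(c_p ⊗ 1) = 1 ⊗ c_p. Then ψ is well-defined on P (it annihilates the ideal of relations) and satisfies the entwining axioms. -/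
open TensorProduct LinearMap

noncomputable section

namespace Eq2Ex

variable (k : Type) [Field k] (q : kˣ)

/-- the defining relations of the quantum Euclidean group `E_q(2)`, on the free
algebra with generators `0 ↦ v`, `1 ↦ v⁻¹`, `2 ↦ n`, `3 ↦ n̄`:
`vn = q²nv`, `vn̄ = q²n̄v`, `nn̄ = q²n̄n`, `vv⁻¹ = v⁻¹v = 1`. -/
inductive EqRel : FreeAlgebra k (Fin 4) → FreeAlgebra k (Fin 4) → Prop
  | vn : EqRel (FreeAlgebra.ι k 0 * FreeAlgebra.ι k 2)
      (((q : k) ^ 2) • (FreeAlgebra.ι k 2 * FreeAlgebra.ι k 0))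
  | vnb : EqRel (FreeAlgebra.ι k 0 * FreeAlgebra.ι k 3)
      (((q : k) ^ 2) • (FreeAlgebra.ι k 3 * FreeAlgebra.ι k 0))
  | nnb : EqRel (FreeAlgebra.ι k 2 * FreeAlgebra.ι k 3)
      (((q : k) ^ 2) • (FreeAlgebra.ι k 3 * FreeAlgebra.ι k 2))
  | vvi : EqRel (FreeAlgebra.ι k 0 * FreeAlgebra.ι k 1) 1
  | viv : EqRel (FreeAlgebra.ι k 1 * FreeAlgebra.ι k 0) 1

/-- the quantum Euclidean group `E_q(2)` -/
abbrev Eq2 : Type := RingQuot (EqRel k q)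

/-- the generator `v` -/
def vE : Eq2 k q := RingQuot.mkAlgHom k (EqRel k q) (FreeAlgebra.ι k 0)
/-- the generator `v⁻¹` -/
def viE : Eq2 k q := RingQuot.mkAlgHom k (EqRel k q) (FreeAlgebra.ι k 1)
/-- the generator `n` -/
def nE : Eq2 k q := RingQuot.mkAlgHom k (EqRel k q) (FreeAlgebra.ι k 2)
/-- the generator `n̄` -/
def nbE : Eq2 k q := RingQuot.mkAlgHom k (EqRel k q) (FreeAlgebra.ι k 3)

/-- the coalgebra `C` spanned by the group-like elements `c_p`, `p ∈ ℤ` -/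
abbrev Cz : Type := ℤ →₀ k

/-- the group-like basis element `c_p` -/
def cz (p : ℤ) : Cz k := Finsupp.single p (1 : k)

variable (μv νv : kˣ) (s : ℤ)

/-- `ψ` takes the prescribed values on the generators of `E_q(2)`. -/
def PsiOnGens (ψ : Cz k ⊗[k] Eq2 k q →ₗ[k] Eq2 k q ⊗[k] Cz k) : Prop :=
  (∀ p : ℤ, ψ (cz k p ⊗ₜ vE k q) = vE k q ⊗ₜ cz k (p + 1)) ∧
  (∀ p : ℤ, ψ (cz k p ⊗ₜ viE k q) = viE k q ⊗ₜ cz k (p - 1)) ∧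
  (∀ p : ℤ, ψ (cz k p ⊗ₜ nE k q) =
    nE k q ⊗ₜ cz k p
      + ((μv : k) * ((q ^ (2 * p) : kˣ) : k)) • (vE k q ⊗ₜ cz k p)
      - ((μv : k) * ((q ^ (2 * p) : kˣ) : k)) • (vE k q ⊗ₜ cz k (p + 1))) ∧
  (∀ p : ℤ, ψ (cz k p ⊗ₜ nbE k q) =
    nbE k q ⊗ₜ cz k p
      + ((νv : k) * ((q ^ (2 * p) : kˣ) : k)) • (viE k q ⊗ₜ cz k p)
      - ((νv : k) * ((q ^ (2 * p) : kˣ) : k)) • (viE k q ⊗ₜ cz k (p - 1)))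

end Eq2Ex

namespace Eq2Ex

section EntwiningMap

variable (k : Type) [Field k] (q μv νv : kˣ)

lemma vE_mul_nE : vE k q * nE k q = ((q : k) ^ 2) • (nE k q * vE k q) := by
  simpa [vE, nE] using RingQuot.mkAlgHom_rel k (EqRel.vn (k := k) (q := q))

lemma vE_mul_nbE : vE k q * nbE k q = ((q : k) ^ 2) • (nbE k q * vE k q) := by
  simpa [vE, nbE] using RingQuot.mkAlgHom_rel k (EqRel.vnb (k := k) (q := q))

lemma nE_mul_nbE : nE k q * nbE k q = ((q : k) ^ 2) • (nbE k q * nE k q) := by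
  simpa [nE, nbE] using RingQuot.mkAlgHom_rel k (EqRel.nnb (k := k) (q := q))

lemma vE_mul_viE : vE k q * viE k q = 1 := by
  simpa [vE, viE] using RingQuot.mkAlgHom_rel k (EqRel.vvi (k := k) (q := q))

lemma viE_mul_vE : viE k q * vE k q = 1 := by
  simpa [vE, viE] using RingQuot.mkAlgHom_rel k (EqRel.viv (k := k) (q := q))

lemma nE_mul_viE : nE k q * viE k q = ((q : k) ^ 2) • (viE k q * nE k q) := by
  calc nE k q * viE k q = viE k q * (vE k q * nE k q) * viE k q := by
        rw [← mul_assoc, viE_mul_vE, one_mul]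
    _ = ((q : k) ^ 2) • (viE k q * nE k q * (vE k q * viE k q)) := by
        rw [vE_mul_nE, mul_smul_comm, smul_mul_assoc]; simp only [mul_assoc]
    _ = _ := by rw [vE_mul_viE, mul_one]

/-- Induction on elements of `E_q(2)` by generators, scalars, sums and products. -/
lemma Eq2.induction {motive : Eq2 k q → Prop}
    (algebraMap : ∀ r : k, motive (algebraMap k _ r))
    (v : motive (vE k q)) (vi : motive (viE k q)) (n : motive (nE k q)) (nb : motive (nbE k q))
    (add : ∀ x y, motive x → motive y → motive (x + y))
    (mul : ∀ x y, motive x → motive y → motive (x * y)) (x : Eq2 k q) : motive x := by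
  obtain ⟨a, rfl⟩ := RingQuot.mkAlgHom_surjective k (EqRel k q) x
  induction a using FreeAlgebra.induction with
  | grade0 r => simpa using algebraMap r
  | grade1 i => fin_cases i <;> assumption
  | mul a b ha hb => simpa using mul _ _ ha hb
  | add a b ha hb => simpa using add _ _ ha hb

/-- The `P`-linear endomorphism of `P ⊗ C` with `u ⊗ c_t ↦ u • g t`. -/
def endOfBasis (g : ℤ → Eq2 k q ⊗[k] Cz k) : Module.End (Eq2 k q) (Eq2 k q ⊗[k] Cz k) :=
  AlgebraTensorModule.lift
    (LinearMap.toSpanSingleton (Eq2 k q) (Cz k →ₗ[k] Eq2 k q ⊗[k] Cz k)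
      (Finsupp.linearCombination k g))

@[simp] lemma endOfBasis_tmul (g : ℤ → Eq2 k q ⊗[k] Cz k) (u : Eq2 k q) (t : ℤ) :
    endOfBasis k q g (u ⊗ₜ cz k t) = u • g t := by
  simp [endOfBasis, cz]

variable {k q} in
lemma end_ext {f g : Module.End (Eq2 k q) (Eq2 k q ⊗[k] Cz k)}
    (h : ∀ t, f (1 ⊗ₜ cz k t) = g (1 ⊗ₜ cz k t)) : f = g := by
  refine AlgebraTensorModule.curry_injective (LinearMap.ext_ring ?_)
  refine Finsupp.lhom_ext' fun t => LinearMap.ext_ring ?_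
  simpa [cz] using h t

/-- The images `ψ(c_t ⊗ x)` for the generators `x` of `E_q(2)`. -/
def psiGen : Fin 4 → ℤ → Eq2 k q ⊗[k] Cz k
  | 0, t => vE k q ⊗ₜ cz k (t + 1)
  | 1, t => viE k q ⊗ₜ cz k (t - 1)
  | 2, t => nE k q ⊗ₜ cz k t
      + ((μv : k) * ((q ^ (2 * t) : kˣ) : k)) • (vE k q ⊗ₜ cz k t)
      - ((μv : k) * ((q ^ (2 * t) : kˣ) : k)) • (vE k q ⊗ₜ cz k (t + 1))
  | 3, t => nbE k q ⊗ₜ cz k t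
      + ((νv : k) * ((q ^ (2 * t) : kˣ) : k)) • (viE k q ⊗ₜ cz k t)
      - ((νv : k) * ((q ^ (2 * t) : kˣ) : k)) • (viE k q ⊗ₜ cz k (t - 1))

lemma q_zpow_succ (t : ℤ) : ((q ^ (2 * (t + 1)) : kˣ) : k) =
    ((q ^ (2 * t) : kˣ) : k) * (q : k) ^ 2 := by
  rw [mul_add, zpow_add]; norm_cast

lemma q_zpow_pred (t : ℤ) :
    ((q ^ (2 * t) : kˣ) : k) = ((q ^ (2 * (t - 1)) : kˣ) : k) * (q : k) ^ 2 := by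
  rw [← q_zpow_succ, sub_add_cancel]

/-- The anti-homomorphism `x ↦ (u ⊗ c ↦ u • ψ(c ⊗ x))`. -/
def psiHom : Eq2 k q →ₐ[k] (Module.End (Eq2 k q) (Eq2 k q ⊗[k] Cz k))ᵐᵒᵖ :=
  RingQuot.liftAlgHom k ⟨FreeAlgebra.lift k fun i =>
      MulOpposite.op (endOfBasis k q (psiGen k q μv νv i)), by
    intro a b h
    apply MulOpposite.unop_injective
    refine end_ext fun t => ?_
    have h1 := vE_mul_nE k q
    have h2 := vE_mul_nbE k q
    have h3 := nE_mul_nbE k q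
    have h4 := vE_mul_viE k q
    have h5 := viE_mul_vE k q
    have h6 := nE_mul_viE k q
    have h7 := q_zpow_pred k q t
    cases h <;>
      simp only [map_mul, map_smul, map_one, FreeAlgebra.lift_ι_apply, MulOpposite.unop_mul,
        MulOpposite.unop_op, MulOpposite.unop_smul, MulOpposite.unop_one, Module.End.mul_apply,
        LinearMap.smul_apply, Module.End.one_apply, endOfBasis_tmul, psiGen, map_add, map_sub,
        one_smul, smul_add, smul_sub, smul_tmul', smul_eq_mul, mul_smul_comm, smul_mul_assoc,
        h1, h2, h3, h4, h5, h6, add_sub_cancel_right, sub_add_cancel, q_zpow_succ, smul_smul]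
    · simp only [← smul_tmul']; module
    · simp only [← smul_tmul']; module
    · rw [h7]; simp only [← smul_tmul']; module⟩

/-- The endomorphism `u ⊗ c ↦ u • ψ(c ⊗ x)` of `P ⊗ C`. -/
def psiEnd (x : Eq2 k q) : Module.End (Eq2 k q) (Eq2 k q ⊗[k] Cz k) :=
  (psiHom k q μv νv x).unop

lemma psiEnd_mul (x y : Eq2 k q) :
    psiEnd k q μv νv (x * y) = psiEnd k q μv νv y * psiEnd k q μv νv x := by
  simp [psiEnd]

lemma psiEnd_add (x y : Eq2 k q) :
    psiEnd k q μv νv (x + y) = psiEnd k q μv νv x + psiEnd k q μv νv y := by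
  simp [psiEnd]

lemma psiEnd_algebraMap (r : k) (w : Eq2 k q ⊗[k] Cz k) :
    psiEnd k q μv νv (algebraMap k _ r) w = r • w := by
  simp [psiEnd]

lemma psiEnd_tmul (x u : Eq2 k q) (c : Cz k) :
    psiEnd k q μv νv x (u ⊗ₜ c) = u • psiEnd k q μv νv x (1 ⊗ₜ c) := by
  rw [← map_smul, smul_tmul', smul_eq_mul, mul_one]

lemma psiEnd_vE (t : ℤ) :
    psiEnd k q μv νv (vE k q) (1 ⊗ₜ cz k t) = psiGen k q μv νv 0 t := by
  simp [psiEnd, psiHom, vE]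

lemma psiEnd_viE (t : ℤ) :
    psiEnd k q μv νv (viE k q) (1 ⊗ₜ cz k t) = psiGen k q μv νv 1 t := by
  simp [psiEnd, psiHom, viE]

lemma psiEnd_nE (t : ℤ) :
    psiEnd k q μv νv (nE k q) (1 ⊗ₜ cz k t) = psiGen k q μv νv 2 t := by
  simp [psiEnd, psiHom, nE]

lemma psiEnd_nbE (t : ℤ) :
    psiEnd k q μv νv (nbE k q) (1 ⊗ₜ cz k t) = psiGen k q μv νv 3 t := by
  simp [psiEnd, psiHom, nbE]

lemma psiEnd_nE_eq_add (t : ℤ) : psiEnd k q μv νv (nE k q) (1 ⊗ₜ cz k t) =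
    (nE k q + ((μv : k) * ((q ^ (2 * t) : kˣ) : k)) • vE k q) ⊗ₜ cz k t
      + (-((μv : k) * ((q ^ (2 * t) : kˣ) : k))) • (vE k q ⊗ₜ cz k (t + 1)) := by
  rw [psiEnd_nE, psiGen, add_tmul, ← smul_tmul']
  module

lemma psiEnd_nbE_eq_add (t : ℤ) : psiEnd k q μv νv (nbE k q) (1 ⊗ₜ cz k t) =
    (nbE k q + ((νv : k) * ((q ^ (2 * t) : kˣ) : k)) • viE k q) ⊗ₜ cz k t
      + (-((νv : k) * ((q ^ (2 * t) : kˣ) : k))) • (viE k q ⊗ₜ cz k (t - 1)) := by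
  rw [psiEnd_nbE, psiGen, add_tmul, ← smul_tmul']
  module

/-- The entwining map `ψ(c ⊗ x)`. -/
def psi : Cz k ⊗[k] Eq2 k q →ₗ[k] Eq2 k q ⊗[k] Cz k :=
  TensorProduct.lift <| LinearMap.mk₂ k (fun c x => psiEnd k q μv νv x (1 ⊗ₜ c))
    (fun c d x => by simp [tmul_add])
    (fun r c x => by rw [tmul_smul, LinearMap.map_smul_of_tower])
    (fun c x y => by simp [psiEnd])
    (fun r c x => by simp [psiEnd])

@[simp] lemma psi_tmul (c : Cz k) (x : Eq2 k q) :
    psi k q μv νv (c ⊗ₜ x) = psiEnd k q μv νv x (1 ⊗ₜ c) := rfl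

lemma psiOnGens_psi : PsiOnGens k q μv νv (psi k q μv νv) :=
  ⟨psiEnd_vE k q μv νv, psiEnd_viE k q μv νv, psiEnd_nE k q μv νv, psiEnd_nbE k q μv νv⟩

variable {k q} in
/-- The counit on the second factor, as a `P`-linear map `P ⊗ C → P`. -/
def counitRight : Eq2 k q ⊗[k] Cz k →ₗ[k] Eq2 k q :=
  (TensorProduct.rid k (Eq2 k q)).toLinearMap ∘ₗ map LinearMap.id (Entwine.ε k (Cz k))

@[simp] lemma counitRight_tmul (u : Eq2 k q) (t : ℤ) :
    counitRight (u ⊗ₜ[k] cz k t) = u := by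
  simp [counitRight, cz]

lemma counitRight_smul (u : Eq2 k q) (w : Eq2 k q ⊗[k] Cz k) :
    counitRight (u • w) = u * counitRight w := by
  induction w with
  | zero => simp
  | add x y hx hy => simp [hx, hy, mul_add]
  | tmul x c => simp [counitRight, smul_tmul']

variable {k q} in
lemma hom_ext_cz {N : Type*} [AddCommGroup N] [Module k N] {f g : Eq2 k q ⊗[k] Cz k →ₗ[k] N}
    (h : ∀ u t, f (u ⊗ₜ cz k t) = g (u ⊗ₜ cz k t)) : f = g :=
  TensorProduct.ext <| LinearMap.ext fun u => Finsupp.lhom_ext' fun t =>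
    LinearMap.ext_ring (by simpa [cz] using h u t)

variable {k} in
lemma hom_ext_cz_left {V N : Type*} [AddCommGroup V] [Module k V] [AddCommGroup N] [Module k N]
    {f g : Cz k ⊗[k] V →ₗ[k] N} (h : ∀ t x, f (cz k t ⊗ₜ x) = g (cz k t ⊗ₜ x)) : f = g :=
  TensorProduct.ext <| Finsupp.lhom_ext' fun t => LinearMap.ext_ring <| LinearMap.ext fun x => by
    simpa [cz] using h t x

lemma counitRight_psiEnd (x : Eq2 k q) (w : Eq2 k q ⊗[k] Cz k) :
    counitRight (psiEnd k q μv νv x w) = counitRight w * x := by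
  have key (x : Eq2 k q)
      (h : ∀ t, counitRight (psiEnd k q μv νv x (1 ⊗ₜ cz k t)) = x) (w : Eq2 k q ⊗[k] Cz k) :
      counitRight (psiEnd k q μv νv x w) = counitRight w * x := by
    have : counitRight ∘ₗ (psiEnd k q μv νv x).restrictScalars k
        = LinearMap.mulRight k x ∘ₗ counitRight := by
      refine hom_ext_cz fun u t => ?_
      simp only [LinearMap.comp_apply, LinearMap.restrictScalars_apply, LinearMap.mulRight_apply]
      rw [psiEnd_tmul, counitRight_smul, h, counitRight_tmul]
    exact LinearMap.congr_fun this w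
  induction x using Eq2.induction generalizing w with
  | algebraMap r => simp [psiEnd_algebraMap, Algebra.smul_def, Algebra.commutes]
  | v => exact key _ (fun t => by simp [psiEnd_vE, psiGen]) w
  | vi => exact key _ (fun t => by simp [psiEnd_viE, psiGen]) w
  | n => exact key _ (fun t => by simp [psiEnd_nE, psiGen]) w
  | nb => exact key _ (fun t => by simp [psiEnd_nbE, psiGen]) w
  | add x y hx hy => simp [psiEnd_add, hx, hy, mul_add]
  | mul x y hx hy => simp [psiEnd_mul, hx, hy, mul_assoc]

/-- The elements `u ⊗ c_t` with `ψ(c_p ⊗ u) = u ⊗ c_t` span the part of `P ⊗ C` on which the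
comultiplicativity axiom at `c_p` holds termwise. -/
def diagSpan (p : ℤ) : Submodule k (Eq2 k q ⊗[k] Cz k) :=
  Submodule.span k
    {w | ∃ u t, psiEnd k q μv νv u (1 ⊗ₜ cz k p) = u ⊗ₜ cz k t ∧ w = u ⊗ₜ cz k t}

lemma psiEnd_mem_diagSpan (x : Eq2 k q) (p : ℤ) (w : Eq2 k q ⊗[k] Cz k)
    (hw : w ∈ diagSpan k q μv νv p) : psiEnd k q μv νv x w ∈ diagSpan k q μv νv p := by
  have mem_mul {u y : Eq2 k q} {t r : ℤ}
      (hu : psiEnd k q μv νv u (1 ⊗ₜ cz k p) = u ⊗ₜ cz k t)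
      (hy : psiEnd k q μv νv y (1 ⊗ₜ cz k t) = y ⊗ₜ cz k r) :
      u • (y ⊗ₜ cz k r) ∈ diagSpan k q μv νv p := by
    refine Submodule.subset_span ⟨u * y, r, ?_, by rw [smul_tmul', smul_eq_mul]⟩
    rw [psiEnd_mul, Module.End.mul_apply, hu, psiEnd_tmul, hy, smul_tmul', smul_eq_mul]
  have key (x : Eq2 k q)
      (h : ∀ u t, psiEnd k q μv νv u (1 ⊗ₜ cz k p) = u ⊗ₜ cz k t →
        u • psiEnd k q μv νv x (1 ⊗ₜ cz k t) ∈ diagSpan k q μv νv p)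
      (w : Eq2 k q ⊗[k] Cz k) (hw : w ∈ diagSpan k q μv νv p) :
      psiEnd k q μv νv x w ∈ diagSpan k q μv νv p := by
    induction hw using Submodule.span_induction with
    | zero => simp
    | add a b _ _ ha hb => rw [map_add]; exact add_mem ha hb
    | smul r a _ ha => rw [LinearMap.map_smul_of_tower]; exact Submodule.smul_mem _ _ ha
    | mem a ha =>
      obtain ⟨u, t, hu, rfl⟩ := ha
      rw [psiEnd_tmul]
      exact h u t hu
  have psiEnd_smul (r : k) (y : Eq2 k q) (w : Eq2 k q ⊗[k] Cz k) :
      psiEnd k q μv νv (r • y) w = r • psiEnd k q μv νv y w := by simp [psiEnd]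
  induction x using Eq2.induction generalizing w with
  | algebraMap r => rw [psiEnd_algebraMap]; exact Submodule.smul_mem _ _ hw
  | v =>
    refine key _ (fun u t hu => ?_) w hw
    rw [psiEnd_vE]
    exact mem_mul hu (psiEnd_vE k q μv νv t)
  | vi =>
    refine key _ (fun u t hu => ?_) w hw
    rw [psiEnd_viE]
    exact mem_mul hu (psiEnd_viE k q μv νv t)
  | n =>
    refine key _ (fun u t hu => ?_) w hw
    have h1 := mem_mul (y := nE k q + ((μv : k) * ((q ^ (2 * t) : kˣ) : k)) • vE k q) (r := t) hu
      (by simp only [psiEnd_add, LinearMap.add_apply, psiEnd_smul, psiEnd_nE, psiEnd_vE, psiGen,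
            add_tmul, ← smul_tmul', sub_add_cancel])
    have h2 := mem_mul (y := vE k q) hu (psiEnd_vE k q μv νv t)
    have h3 := add_mem h1 (Submodule.smul_mem _ (-((μv : k) * ((q ^ (2 * t) : kˣ) : k))) h2)
    rwa [smul_comm (-_) u, ← smul_add, ← psiEnd_nE_eq_add k q μv νv t] at h3
  | nb =>
    refine key _ (fun u t hu => ?_) w hw
    have h1 := mem_mul (y := nbE k q + ((νv : k) * ((q ^ (2 * t) : kˣ) : k)) • viE k q) (r := t) hu
      (by simp only [psiEnd_add, LinearMap.add_apply, psiEnd_smul, psiEnd_nbE, psiEnd_viE, psiGen,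
            add_tmul, ← smul_tmul', sub_add_cancel])
    have h2 := mem_mul (y := viE k q) hu (psiEnd_viE k q μv νv t)
    have h3 := add_mem h1 (Submodule.smul_mem _ (-((νv : k) * ((q ^ (2 * t) : kˣ) : k))) h2)
    rwa [smul_comm (-_) u, ← smul_add, ← psiEnd_nbE_eq_add k q μv νv t] at h3
  | add x y hx hy => rw [psiEnd_add]; exact add_mem (hx w hw) (hy w hw)
  | mul x y hx hy => rw [psiEnd_mul]; exact hy _ (hx w hw)

lemma one_tmul_mem_diagSpan (p : ℤ) : 1 ⊗ₜ cz k p ∈ diagSpan k q μv νv p :=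
  Submodule.subset_span ⟨1, p, by simpa using psiEnd_algebraMap k q μv νv 1 (1 ⊗ₜ cz k p), rfl⟩

lemma axMul_psi : Entwine.AxMul k (Eq2 k q) (Cz k) (psi k q μv νv) := by
  refine TensorProduct.ext <| LinearMap.ext fun c =>
    TensorProduct.ext (LinearMap.ext₂ fun x y => ?_)
  suffices ∀ w : Eq2 k q ⊗[k] Cz k, psiEnd k q μv νv y w =
      map (Entwine.μ k (Eq2 k q)) LinearMap.id ((TensorProduct.assoc k _ _ _).symm
        (map LinearMap.id (psi k q μv νv) (TensorProduct.assoc k _ _ _ (w ⊗ₜ y)))) by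
    simpa [psiEnd_mul] using this (psiEnd k q μv νv x (1 ⊗ₜ c))
  have smul_eq (u : Eq2 k q) (w : Eq2 k q ⊗[k] Cz k) : u • w =
      map (Entwine.μ k (Eq2 k q)) LinearMap.id ((TensorProduct.assoc k _ _ _).symm (u ⊗ₜ w)) := by
    induction w with
    | zero => simp
    | add a b ha hb => simp only [smul_add, tmul_add, map_add, ha, hb]
    | tmul a c => simp [smul_tmul']
  intro w
  induction w with
  | zero => simp
  | add a b ha hb => simp only [map_add, add_tmul, ha, hb]
  | tmul u c => rw [psiEnd_tmul, smul_eq]; simp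

lemma axComul_psi : Entwine.AxComul k (Eq2 k q) (Cz k) (psi k q μv νv) := by
  refine hom_ext_cz_left (V := Eq2 k q) (N := Eq2 k q ⊗[k] (Cz k ⊗[k] Cz k)) fun p x => ?_
  suffices ∀ w ∈ diagSpan k q μv νv p, map LinearMap.id (Entwine.Δ k (Cz k)) w =
      TensorProduct.assoc k (Eq2 k q) (Cz k) (Cz k) (map (psi k q μv νv) LinearMap.id
        ((TensorProduct.assoc k (Cz k) (Eq2 k q) (Cz k)).symm (cz k p ⊗ₜ w))) by
    simpa [cz] using
      this _ (psiEnd_mem_diagSpan k q μv νv x p _ (one_tmul_mem_diagSpan k q μv νv p))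
  intro w hw
  induction hw using Submodule.span_induction with
  | zero => simp
  | add a b _ _ ha hb => simp only [map_add, tmul_add, ha, hb]
  | smul r a _ ha => simp only [map_smul, tmul_smul, ha]
  | mem a ha =>
    obtain ⟨u, t, hu, rfl⟩ := ha
    simp [hu]
    simp [cz]

lemma axCounit_psi : Entwine.AxCounit k (Eq2 k q) (Cz k) (psi k q μv νv) := by
  refine hom_ext_cz_left fun p x => ?_
  have h := counitRight_psiEnd k q μv νv x (1 ⊗ₜ cz k p)
  rw [counitRight_tmul, one_mul] at h
  simpa [counitRight, cz] using h

end EntwiningMap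

/-- The map `ψ` defined on the generators of `E_q(2)` by the formulas
of the `E_q(2)` example is well defined (it respects the defining relations) and
satisfies the entwining axioms: i.e. there exists a linear map
`ψ : C ⊗ E_q(2) → E_q(2) ⊗ C` taking the prescribed values on generators which is an
entwining map. -/
theorem eq2_entwining (k : Type) [Field k] (q μv νv : kˣ) :
    ∃ ψ : Cz k ⊗[k] Eq2 k q →ₗ[k] Eq2 k q ⊗[k] Cz k,
      PsiOnGens k q μv νv ψ ∧ Entwine.IsEntwining k (Eq2 k q) (Cz k) ψ :=
  ⟨psi k q μv νv, psiOnGens_psi k q μv νv, axMul_psi k q μv νv,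
    fun c => by simpa using psiEnd_algebraMap k q μv νv 1 (1 ⊗ₜ c),
    axComul_psi k q μv νv, axCounit_psi k q μv νv⟩

end Eq2Ex
end
end
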